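/- arXiv:1605.09430 — 7 statements merged into one kernel-verified Lean document; each statement's English description precedes it below -/
import Mathlib

section
/- Let P, Q ∈ K[x,y] with [P,Q] ∈ K∖{0} (a nonzero constant). Then the Newton polygon of P has no edge of slope 1; precisely, both ℓ_{1,−1}(P) and ℓ_{−1,1}(P) are monomials, i.e. Supp(ℓ_{1,−1}(P)) and Supp(ℓ_{−1,1}(P)) each consist of exactly one point. -/
open MvPolynomial

noncomputable section

variable {K : Type*} [Field K] [CharZero K]

/-- The support of `P` as a set of pairs `(i,j)` of exponents of `x^i y^j`. -/
def Supp (P : MvPolynomial (Fin 2) K) : Set (ℕ × ℕ) :=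
  {p | MvPolynomial.coeff (Finsupp.single 0 p.1 + Finsupp.single 1 p.2) P ≠ 0}

/-- The Jacobian bracket `[P,Q] = ∂ₓP ∂_yQ − ∂ₓQ ∂_yP`. -/
def Jb (P Q : MvPolynomial (Fin 2) K) : MvPolynomial (Fin 2) K :=
  pderiv 0 P * pderiv 1 Q - pderiv 0 Q * pderiv 1 P

/-- The `(ρ,σ)`-degree `v_{ρ,σ}(P)` (the maximum of `ρi+σj` on the support). -/
def wdeg (ρ σ : ℤ) (P : MvPolynomial (Fin 2) K) : ℤ :=
  sSup {d : ℤ | ∃ p ∈ Supp P, d = ρ * (p.1 : ℤ) + σ * (p.2 : ℤ)}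

/-- The support of the `(ρ,σ)`-leading form of `P`. -/
def LeadSupp (ρ σ : ℤ) (P : MvPolynomial (Fin 2) K) : Set (ℕ × ℕ) :=
  {p | p ∈ Supp P ∧ ρ * (p.1 : ℤ) + σ * (p.2 : ℤ) = wdeg ρ σ P}

/-- `P` is `(ρ,σ)`-homogeneous. -/
def IsHomog (ρ σ : ℤ) (P : MvPolynomial (Fin 2) K) : Prop :=
  ∀ p ∈ Supp P, ∀ q ∈ Supp P,
    ρ * (p.1 : ℤ) + σ * (p.2 : ℤ) = ρ * (q.1 : ℤ) + σ * (q.2 : ℤ)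

/-- `P` is a monomial: its support has at most one point. -/
def IsMonomial (P : MvPolynomial (Fin 2) K) : Prop := (Supp P).Subsingleton

/-- `e` is the point `en_{ρ,σ}(P)`: the point of the support of the leading form
with largest second coordinate. -/
def IsEn (ρ σ : ℤ) (P : MvPolynomial (Fin 2) K) (e : ℕ × ℕ) : Prop :=
  e ∈ LeadSupp ρ σ P ∧ ∀ q ∈ LeadSupp ρ σ P, q.2 ≤ e.2

/-- `e` is the point `st_{ρ,σ}(P)`: the point of the support of the leading form
with smallest second coordinate. -/
def IsSt (ρ σ : ℤ) (P : MvPolynomial (Fin 2) K) (e : ℕ × ℕ) : Prop :=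
  e ∈ LeadSupp ρ σ P ∧ ∀ q ∈ LeadSupp ρ σ P, e.2 ≤ q.2

section Helpers

variable {k : Type*} [Field k]

/-- The ordered group of exponents of `t = 1/x` and `u`. -/
abbrev Gm := ℤ ×ₗ ℤ

/-- The Euler derivation attached to an additive character of the exponent group. -/
def thFun (φ : Gm →+ k) (a : HahnSeries Gm k) : HahnSeries Gm k where
  coeff g := φ g * a.coeff g
  isPWO_support' := a.isPWO_support.mono (by
    intro g hg h
    exact hg (by simp [h]))

lemma thFun_coeff (φ : Gm →+ k) (a : HahnSeries Gm k) (g : Gm) :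
    (thFun φ a).coeff g = φ g * a.coeff g := rfl

lemma thFun_support (φ : Gm →+ k) (a : HahnSeries Gm k) :
    (thFun φ a).support ⊆ a.support := by
  intro g hg h
  exact hg (by simp [thFun_coeff, h])

lemma thFun_mul (φ : Gm →+ k) (a b : HahnSeries Gm k) :
    thFun φ (a * b) = a * thFun φ b + b * thFun φ a := by
  ext g
  rw [mul_comm b, HahnSeries.coeff_add, thFun_coeff,
    HahnSeries.coeff_mul_left' a.isPWO_support (thFun_support φ a),
    HahnSeries.coeff_mul_right' b.isPWO_support (thFun_support φ b),
    HahnSeries.coeff_mul, Finset.mul_sum, ← Finset.sum_add_distrib]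
  refine Finset.sum_congr rfl fun ij h => ?_
  have h3 : ij.1 + ij.2 = g := by simpa using (Finset.mem_antidiagonal.1 h).2.2
  rw [thFun_coeff, thFun_coeff, ← h3, map_add]
  ring

/-- The derivation version of `thFun`. -/
def th (φ : Gm →+ k) : Derivation k (HahnSeries Gm k) (HahnSeries Gm k) :=
  Derivation.mk'
    { toFun := thFun φ
      map_add' := by
        intro a b
        ext g
        simp [thFun_coeff, mul_add]
      map_smul' := by
        intro r a
        ext g
        simp [thFun_coeff]
        ring }
    (by
      intro a b
      simpa using thFun_mul φ a b)

lemma th_coeff (φ : Gm →+ k) (a : HahnSeries Gm k) (g : Gm) :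
    (th φ a).coeff g = φ g * a.coeff g := rfl

lemma th_comm (φ ψ : Gm →+ k) (a : HahnSeries Gm k) : th φ (th ψ a) = th ψ (th φ a) := by
  ext g
  simp only [th_coeff]
  ring

lemma th_single (φ : Gm →+ k) (g : Gm) (r : k) :
    th φ (HahnSeries.single g r) = HahnSeries.C (φ g) * HahnSeries.single g r := by
  ext h
  rw [th_coeff, HahnSeries.C_mul_eq_smul, HahnSeries.coeff_smul, smul_eq_mul]
  by_cases hh : h = g
  · rw [hh]
  · simp [HahnSeries.coeff_single_of_ne hh]

lemma logder (φ : Gm →+ k) (p : HahnSeries Gm k) (hp : p ≠ 0) (d : Gm) (hd : d ≤ 0) :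
    (th φ p / p - HahnSeries.C (φ p.order)).coeff d = 0 := by
  set a := th φ p / p - HahnSeries.C (φ p.order) with ha
  by_cases h0 : a = 0
  · simp [h0]
  have h1 : a * p = th φ p - HahnSeries.C (φ p.order) * p := by
    rw [ha]; field_simp
  have h2 : (a * p).coeff (a * p).order ≠ 0 := by
    rw [Ne, HahnSeries.coeff_order_eq_zero]
    exact mul_ne_zero h0 hp
  have h3 : ¬ (a * p).order ≤ p.order := by
    intro hle
    apply h2
    generalize (a * p).order = o at hle ⊢
    rw [h1, HahnSeries.coeff_sub, th_coeff, HahnSeries.C_mul_eq_smul, HahnSeries.coeff_smul,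
      smul_eq_mul]
    rcases hle.lt_or_eq with h | h
    · rw [HahnSeries.coeff_eq_zero_of_lt_order h]; ring
    · rw [h]; ring
  rw [HahnSeries.order_mul h0 hp] at h3
  have h4 : 0 < a.order := by
    by_contra hc
    exact h3 (by simpa using add_le_add_left (not_lt.1 hc) p.order)
  exact HahnSeries.coeff_eq_zero_of_lt_order (lt_of_le_of_lt hd h4)

lemma logder_zero (φ : Gm →+ k) (p : HahnSeries Gm k) (hp : p ≠ 0) :
    (th φ p / p).coeff 0 = φ p.order := by
  have := logder φ p hp 0 le_rfl
  rw [HahnSeries.coeff_sub, sub_eq_zero] at this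
  simpa [HahnSeries.C_apply] using this

lemma logder_neg (φ : Gm →+ k) (p : HahnSeries Gm k) (hp : p ≠ 0) (d : Gm) (hd : d < 0) :
    (th φ p / p).coeff d = 0 := by
  have := logder φ p hp d hd.le
  rw [HahnSeries.coeff_sub, sub_eq_zero] at this
  rw [this, HahnSeries.C_apply, HahnSeries.coeff_single_of_ne hd.ne]

/-- The residue of `dlog p ∧ ds` vanishes. -/
lemma res_exact (φ ψ : Gm →+ k) (p s : HahnSeries Gm k) (hp : p ≠ 0) :
    ((th φ p * th ψ s - th ψ p * th φ s) / p).coeff 0 = 0 := by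
  have h : (th φ p * th ψ s - th ψ p * th φ s) / p
      = th ψ (s * (th φ p / p)) - th φ (s * (th ψ p / p)) := by
    rw [Derivation.leibniz, Derivation.leibniz, Derivation.leibniz_div, Derivation.leibniz_div,
      th_comm ψ φ p]
    simp only [smul_eq_mul]
    field_simp
    ring
  rw [h, HahnSeries.coeff_sub, th_coeff, th_coeff]
  simp

/-- Chain rule for a derivation along an evaluation of a polynomial in two variables. -/
lemma chain {A : Type*} [CommRing A] [Algebra k A] (D : Derivation k A A) (v : Fin 2 → A)
    (F : MvPolynomial (Fin 2) k) :
    D (aeval v F) = aeval v (pderiv 0 F) * D (v 0) + aeval v (pderiv 1 F) * D (v 1) := by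
  induction F using MvPolynomial.induction_on with
  | C a => simp
  | add p q hp hq => simp only [map_add, hp, hq]; ring
  | mul_X p i hp =>
    rw [map_mul, Derivation.leibniz, hp, Derivation.leibniz, Derivation.leibniz]
    fin_cases i <;> simp [pderiv_X] <;> ring

/-- Formal antiderivative in the variable `i`. -/
def integ (i : Fin 2) : MvPolynomial (Fin 2) k →ₗ[k] MvPolynomial (Fin 2) k :=
  (MvPolynomial.basisMonomials (Fin 2) k).constr k
    fun s => monomial (s + Finsupp.single i 1) ((s i + 1 : k)⁻¹)

lemma integ_monomial (i : Fin 2) (s : Fin 2 →₀ ℕ) (a : k) :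
    integ i (monomial s a) = monomial (s + Finsupp.single i 1) (a * (s i + 1 : k)⁻¹) := by
  have h : monomial s a = a • (MvPolynomial.basisMonomials (Fin 2) k) s := by
    simp [smul_monomial]
  rw [h, map_smul, integ, Module.Basis.constr_basis, smul_monomial, smul_eq_mul]

lemma pderiv_integ [CharZero k] (i : Fin 2) (F : MvPolynomial (Fin 2) k) :
    pderiv i (integ i F) = F := by
  induction F using MvPolynomial.induction_on' with
  | monomial s a =>
    rw [integ_monomial, pderiv_monomial]
    have : (s i + 1 : k) ≠ 0 := by exact_mod_cast Nat.succ_ne_zero (s i)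
    simp [this]
  | add p q hp hq => simp only [map_add, hp, hq]

lemma pderiv_integ_ne (i j : Fin 2) (hij : j ≠ i) (F : MvPolynomial (Fin 2) k) :
    pderiv j (integ i F) = integ i (pderiv j F) := by
  induction F using MvPolynomial.induction_on' with
  | monomial s a =>
    rw [integ_monomial, pderiv_monomial, pderiv_monomial, integ_monomial]
    by_cases hs : s j = 0
    · simp [hs, hij]
    · congr 1
      · congr 1
        ext l
        simp only [Finsupp.coe_add, Finsupp.coe_tsub, Pi.add_apply, Pi.sub_apply]
        by_cases hl : l = j
        · subst hl
          simp [hij.symm]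
        · simp [Finsupp.single_apply, Ne.symm hl]
      · simp [hij, hij.symm]
        ring
  | add p q hp hq => simp only [map_add, hp, hq]

lemma poincare [CharZero k] (A B : MvPolynomial (Fin 2) k) (h : pderiv 1 A = pderiv 0 B) :
    ∃ S, pderiv 0 S = A ∧ pderiv 1 S = B := by
  refine ⟨integ 0 A + integ 1 (B - pderiv 1 (integ 0 A)), ?_, ?_⟩
  · rw [map_add, pderiv_integ, pderiv_integ_ne 1 0 (by decide), map_sub,
      pderiv_integ_ne 0 1 (by decide), pderiv_integ, h]
    simp
  · rw [map_add, pderiv_integ]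
    ring

lemma pderiv_comm01 (F : MvPolynomial (Fin 2) k) :
    pderiv 0 (pderiv 1 F) = pderiv 1 (pderiv 0 F) := by
  induction F using MvPolynomial.induction_on' with
  | monomial s a =>
    simp only [pderiv_monomial]
    congr 1
    · congr 1
      ext l
      simp only [Finsupp.coe_tsub, Pi.sub_apply]
      omega
    · simp
      ring
  | add p q hp hq => simp only [map_add, hp, hq]

lemma exists_S [CharZero k] (P Q : MvPolynomial (Fin 2) k) (c : k)
    (h : pderiv 0 P * pderiv 1 Q - pderiv 0 Q * pderiv 1 P = C c) :
    ∃ S, pderiv 0 P * pderiv 1 S - pderiv 1 P * pderiv 0 S = C c * (P - X 0 * pderiv 0 P) := by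
  obtain ⟨S, h0, h1⟩ := poincare (P * pderiv 0 Q) (P * pderiv 1 Q - C c * X 0) (by
    simp only [Derivation.leibniz, map_sub, smul_eq_mul, pderiv_C, pderiv_X_self, pderiv_comm01]
    linear_combination -h)
  refine ⟨S, ?_⟩
  rw [h0, h1]
  linear_combination P * h

/-- The degree in `x`. -/
def phx : Gm →+ k where
  toFun g := -((ofLex g).1 : k)
  map_zero' := by simp
  map_add' a b := by simp; ring

/-- The degree in `u`. -/
def phu : Gm →+ k where
  toFun g := ((ofLex g).2 : k)
  map_zero' := by simp
  map_add' a b := by simp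

/-- The images of `x` and `y`. -/
def vv (α : k) : Fin 2 → HahnSeries Gm k :=
  ![HahnSeries.single (toLex (-1, 0)) 1,
    HahnSeries.single (toLex (1, 1)) 1 + HahnSeries.C α * HahnSeries.single (toLex (1, 0)) 1]

/-- The element `u`. -/
def uu : HahnSeries Gm k := HahnSeries.single (toLex (0, 1)) 1

lemma core1 [CharZero k] (P Q : MvPolynomial (Fin 2) k) (c α : k) (hc : c ≠ 0)
    (h : pderiv 0 P * pderiv 1 Q - pderiv 0 Q * pderiv 1 P = C c)
    (hp : aeval (vv α) P ≠ 0) :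
    α * ((ofLex (aeval (vv α) P).order).2 : k) = 0 := by
  obtain ⟨S, hS⟩ := exists_S P Q c h
  have hS' := congrArg (aeval (vv α)) hS
  simp only [map_mul, map_sub, aeval_X, aeval_C] at hS'
  set p := aeval (vv α) P with hpdef
  set s := aeval (vv α) S with hsdef
  set x : HahnSeries Gm k := HahnSeries.single (toLex (-1, 0)) 1 with hx
  set w : HahnSeries Gm k := HahnSeries.single (toLex (1, 1)) 1 with hw
  set xi : HahnSeries Gm k := HahnSeries.single (toLex (1, 0)) 1 with hxi
  have v0 : vv α 0 = x := rfl
  have v1 : vv α 1 = w + HahnSeries.C α * xi := rfl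
  have hxxi : x * xi = 1 := by
    rw [hx, hxi, HahnSeries.single_mul_single, ← toLex_add, ← HahnSeries.single_zero_one]
    simp
    rfl
  have hxw : x * w = uu := by
    rw [hx, hw, HahnSeries.single_mul_single]
    simp [← toLex_add, uu]
  have tx : th phx (vv α 0) = x := by
    rw [v0, hx, th_single]; simp [phx]
  have tu : th phu (vv α 0) = 0 := by
    rw [v0, hx, th_single]; simp [phu]
  have hCd : ∀ φ : Gm →+ k, th φ (HahnSeries.C α) = 0 := by
    intro φ
    have : (HahnSeries.C α : HahnSeries Gm k) = algebraMap k _ α := by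
      rw [← HahnSeries.C_eq_algebraMap]
    rw [this, Derivation.map_algebraMap]
  have ty : th phx (vv α 1) = - vv α 1 := by
    rw [v1, map_add, Derivation.leibniz, hCd, hw, hxi, th_single, th_single]
    simp [phx]
    ring
  have ty2 : th phu (vv α 1) = w := by
    rw [v1, map_add, Derivation.leibniz, hCd, hw, hxi, th_single, th_single]
    simp [phu]
  have e1 := chain (th (phx (k := k))) (vv α) P
  have e2 := chain (th (phu (k := k))) (vv α) P
  have e3 := chain (th (phx (k := k))) (vv α) S
  have e4 := chain (th (phu (k := k))) (vv α) S
  rw [tx, ty, v1, ← hpdef] at e1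
  rw [tu, ty2, ← hpdef] at e2
  rw [tx, ty, v1, ← hsdef] at e3
  rw [tu, ty2, ← hsdef] at e4
  rw [v0] at hS'
  have hca : algebraMap k (HahnSeries Gm k) c = HahnSeries.C c := by
    rw [← HahnSeries.C_eq_algebraMap]
  rw [hca] at hS'
  have key : th phx p * th phu s - th phu p * th phx s = HahnSeries.C c *
      (uu * p - uu * th phx p - uu * th phu p - HahnSeries.C α * th phu p) := by
    rw [e1, e2, e3, e4, ← hxw]
    generalize aeval (vv α) (pderiv 0 P) = a at *
    generalize aeval (vv α) (pderiv 1 P) = b at *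
    generalize aeval (vv α) (pderiv 0 S) = a' at *
    generalize aeval (vv α) (pderiv 1 S) = b' at *
    linear_combination x * w * hS' - (HahnSeries.C c * HahnSeries.C α * b * w) * hxxi
  have r0 := res_exact phx phu p s hp
  rw [key] at r0
  have key2 : HahnSeries.C c *
      (uu * p - uu * th phx p - uu * th phu p - HahnSeries.C α * th phu p) / p
      = HahnSeries.C c * (uu - uu * (th phx p / p) - uu * (th phu p / p)
        - HahnSeries.C α * (th phu p / p)) := by
    field_simp
  have hneg : (0 : Gm) - toLex (0, 1) < 0 := by
    rw [sub_lt_zero]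
    change toLex ((0 : ℤ), (0 : ℤ)) < toLex (0, 1)
    rw [Prod.Lex.toLex_lt_toLex]
    simp
  have hu0 : (uu : HahnSeries Gm k).coeff 0 = 0 := by
    rw [uu, HahnSeries.coeff_single_of_ne]
    intro h
    rw [← h] at hneg
    simp at hneg
  rw [key2, HahnSeries.C_mul_eq_smul, HahnSeries.coeff_smul, HahnSeries.coeff_sub,
    HahnSeries.coeff_sub, HahnSeries.coeff_sub, HahnSeries.C_mul_eq_smul, HahnSeries.coeff_smul,
    logder_zero _ _ hp, hu0, uu, HahnSeries.coeff_single_mul, HahnSeries.coeff_single_mul,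
    logder_neg _ _ hp _ hneg, logder_neg _ _ hp _ hneg] at r0
  simpa [hc, phu] using r0

lemma nsmul_gm (n : ℕ) (a b : ℤ) : n • (toLex (a, b) : Gm) = toLex (n * a, n * b) := by
  induction n with
  | zero => simp; rfl
  | succ n ih =>
    rw [succ_nsmul, ih, ← toLex_add, Prod.mk_add_mk]
    push_cast
    ring_nf

lemma aeval_uu (g : Polynomial k) :
    Polynomial.aeval (uu : HahnSeries Gm k) g
      = g.sum fun n a => HahnSeries.single (toLex (0, (n : ℤ))) a := by
  rw [Polynomial.aeval_eq_sum_range, Polynomial.sum_over_range _ (by simp)]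
  refine Finset.sum_congr rfl fun n _ => ?_
  rw [uu, HahnSeries.single_pow, nsmul_gm, ← HahnSeries.C_mul_eq_smul, HahnSeries.C_apply,
    HahnSeries.single_mul_single]
  simp

lemma uu_coeff (g : Polynomial k) (d : Gm) :
    (Polynomial.aeval (uu : HahnSeries Gm k) g).coeff d
      = g.sum fun n a => if d = toLex (0, (n : ℤ)) then a else 0 := by
  rw [aeval_uu, Polynomial.sum, Polynomial.sum, HahnSeries.coeff_sum]
  refine Finset.sum_congr rfl fun n _ => ?_
  by_cases h : d = toLex (0, (n : ℤ))
  · rw [if_pos h, h, HahnSeries.coeff_single_same]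
  · rw [if_neg h, HahnSeries.coeff_single_of_ne h]

lemma uu_coeff_ne (g : Polynomial k) (d : Gm)
    (h : (Polynomial.aeval (uu : HahnSeries Gm k) g).coeff d ≠ 0) :
    ∃ n : ℕ, d = toLex (0, (n : ℤ)) ∧ g.coeff n ≠ 0 := by
  rw [uu_coeff, Polynomial.sum] at h
  obtain ⟨n, hn, h2⟩ := Finset.exists_ne_zero_of_sum_ne_zero h
  by_cases hd : d = toLex (0, (n : ℤ))
  · rw [if_pos hd] at h2
    exact ⟨n, hd, h2⟩
  · rw [if_neg hd] at h2
    exact absurd rfl h2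

lemma uu_coeff_nat (g : Polynomial k) (n : ℕ) :
    (Polynomial.aeval (uu : HahnSeries Gm k) g).coeff (toLex (0, (n : ℤ))) = g.coeff n := by
  rw [uu_coeff, Polynomial.sum]
  simp +contextual

/-- The `(1,-1)`-homogeneous component of degree `m`, written as `x^m f(xy)`. -/
def fm (m : ℤ) : MvPolynomial (Fin 2) k →ₗ[k] Polynomial k :=
  (MvPolynomial.basisMonomials (Fin 2) k).constr k
    fun s => if (s 0 : ℤ) - s 1 = m then Polynomial.X ^ (s 1) else 0

lemma fm_monomial (m : ℤ) (s : Fin 2 →₀ ℕ) (a : k) :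
    fm m (monomial s a) = if (s 0 : ℤ) - s 1 = m then Polynomial.C a * Polynomial.X ^ (s 1)
      else 0 := by
  have h : monomial s a = a • (MvPolynomial.basisMonomials (Fin 2) k) s := by
    simp [smul_monomial]
  rw [h, map_smul, fm, Module.Basis.constr_basis]
  split_ifs
  · rw [Polynomial.smul_eq_C_mul]
  · simp

lemma fm_coeff (i j : ℕ) (P : MvPolynomial (Fin 2) k) :
    (fm ((i : ℤ) - j) P).coeff j = coeff (Finsupp.single 0 i + Finsupp.single 1 j) P := by
  induction P using MvPolynomial.induction_on' with
  | monomial s a =>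
    rw [fm_monomial, coeff_monomial]
    by_cases h : s = Finsupp.single 0 i + Finsupp.single 1 j
    · subst h
      simp
    · rw [if_neg h]
      split_ifs with h1
      · rw [Polynomial.coeff_C_mul, Polynomial.coeff_X_pow, if_neg, mul_zero]
        intro h2
        apply h
        ext l
        fin_cases l
        · simp; omega
        · simp; omega
      · simp
  | add p q hp hq => simp [hp, hq]

lemma fm_coeff_neg (m : ℤ) (j : ℕ) (hm : m + j < 0) (P : MvPolynomial (Fin 2) k) :
    (fm m P).coeff j = 0 := by
  induction P using MvPolynomial.induction_on' with
  | monomial s a =>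
    rw [fm_monomial]
    split_ifs with h1
    · rw [Polynomial.coeff_C_mul, Polynomial.coeff_X_pow, if_neg, mul_zero]
      omega
    · simp
  | add p q hp hq => simp [hp, hq]

lemma aeval_vv_coeff (α : k) (P : MvPolynomial (Fin 2) k) (d e : ℤ) :
    (aeval (vv α) P).coeff (toLex (d, e)) = (Polynomial.aeval (uu : HahnSeries Gm k)
      ((fm (-d) P).comp (Polynomial.X + Polynomial.C α))).coeff (toLex (0, e)) := by
  induction P using MvPolynomial.induction_on' with
  | monomial s a =>
    have hy : vv α 1 = HahnSeries.single (toLex (1, 0)) 1 *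
        Polynomial.aeval (uu : HahnSeries Gm k) (Polynomial.X + Polynomial.C α) := by
      have : vv α 1 = HahnSeries.single (toLex (1, 1)) 1
        + HahnSeries.C α * HahnSeries.single (toLex (1, 0)) 1 := rfl
      rw [this, map_add, Polynomial.aeval_X, Polynomial.aeval_C, ← HahnSeries.C_eq_algebraMap,
        mul_add, uu, HahnSeries.single_mul_single, mul_comm (HahnSeries.C α)]
      simp [← toLex_add]
    have hm : aeval (vv α) (monomial s a) =
        HahnSeries.single (toLex ((s 1 : ℤ) - s 0, 0)) 1 * Polynomial.aeval (uu : HahnSeries Gm k)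
        (Polynomial.C a * (Polynomial.X + Polynomial.C α) ^ (s 1)) := by
      rw [aeval_monomial, Finsupp.prod_fintype _ _ (by simp), Fin.prod_univ_two, hy, map_mul,
        map_pow, Polynomial.aeval_C, mul_pow]
      have h0 : vv α 0 = HahnSeries.single (toLex (-1, 0)) 1 := rfl
      have h1 : (HahnSeries.single (toLex ((s 1 : ℤ) - s 0, 0)) 1 : HahnSeries Gm k) =
          HahnSeries.single (toLex (-1, 0)) 1 ^ (s 0) *
          HahnSeries.single (toLex (1, 0)) 1 ^ (s 1) := by
        rw [HahnSeries.single_pow, HahnSeries.single_pow, HahnSeries.single_mul_single,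
          nsmul_gm, nsmul_gm, ← toLex_add]
        simp [sub_eq_neg_add]
      rw [h0, h1]
      ring
    rw [hm, HahnSeries.coeff_single_mul, one_mul, ← toLex_sub, fm_monomial]
    split_ifs with h
    · have : d - ((s 1 : ℤ) - s 0) = 0 := by omega
      simp [this]
    · by_contra hne
      simp only [Polynomial.zero_comp, map_zero, HahnSeries.coeff_zero] at hne
      obtain ⟨n, hn, -⟩ := uu_coeff_ne _ _ hne
      have := congrArg (fun z : Gm => (ofLex z).1) hn
      simp at this
      omega
  | add p q hp hq => simp [hp, hq]

lemma core2 [CharZero k] (P Q : MvPolynomial (Fin 2) k) (c α : k) (hc : c ≠ 0)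
    (h : pderiv 0 P * pderiv 1 Q - pderiv 0 Q * pderiv 1 P = C c)
    (m : ℤ) (hm : ∀ m', m < m' → fm m' P = 0) (hf : fm m P ≠ 0)
    (hα : (fm m P).eval α = 0) : α = 0 := by
  set g := (fm m P).comp (Polynomial.X + Polynomial.C α) with hg
  have hg0 : g ≠ 0 := by
    intro h0
    apply hf
    have : g.comp (Polynomial.X - Polynomial.C α) = fm m P := by
      rw [hg, Polynomial.comp_assoc]; simp
    rw [← this, h0, Polynomial.zero_comp]
  have hgc : g.coeff 0 = 0 := by
    rw [Polynomial.coeff_zero_eq_eval_zero, hg, Polynomial.eval_comp]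
    simpa using hα
  obtain ⟨n, hn⟩ : ∃ n, g.coeff n ≠ 0 := by
    by_contra hcon
    push Not at hcon
    exact hg0 (Polynomial.ext (by simpa using hcon))
  have hcn : (aeval (vv α) P).coeff (toLex (-m, (n : ℤ))) ≠ 0 := by
    rw [aeval_vv_coeff, neg_neg, uu_coeff_nat]
    exact hn
  have hp : aeval (vv α) P ≠ 0 := by
    intro h0
    rw [h0] at hcn
    simp at hcn
  have hle := HahnSeries.order_le_of_coeff_ne_zero hcn
  have ho : (aeval (vv α) P).coeff (aeval (vv α) P).order ≠ 0 := by
    rw [Ne, HahnSeries.coeff_order_eq_zero]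
    exact hp
  have h1 := core1 P Q c α hc h hp
  generalize (aeval (vv α) P).order = o at *
  obtain ⟨⟨d, e⟩, rfl⟩ := toLex.surjective o
  rw [aeval_vv_coeff] at ho
  obtain ⟨l, hl, hl2⟩ := uu_coeff_ne _ _ ho
  have hdm : d = -m := by
    rw [Prod.Lex.toLex_le_toLex] at hle
    rcases hle with hlt | heq
    · exfalso
      apply hl2
      rw [hm (-d) (by simp at hlt; omega)]
      simp
    · exact heq.1
  rw [hdm, neg_neg, ← hg] at hl2
  have he : e = l := by simpa using hl
  have hl0 : l ≠ 0 := by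
    rintro rfl
    exact hl2 hgc
  simpa [he, hl0] using h1
lemma fm_map {k' : Type*} [Field k'] (σ : k →+* k') (m : ℤ) (P : MvPolynomial (Fin 2) k) :
    fm m (MvPolynomial.map σ P) = (fm m P).map σ := by
  induction P using MvPolynomial.induction_on' with
  | monomial s a =>
    rw [map_monomial, fm_monomial, fm_monomial]
    split_ifs <;> simp
  | add p q hp hq => simp [hp, hq]

lemma monomial_of_roots {F : Type*} [Field F] [IsAlgClosed F] (f : Polynomial F) (hf : f ≠ 0)
    (h : ∀ a, f.eval a = 0 → a = 0) : ∃ n, ∀ j, f.coeff j ≠ 0 → j = n := by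
  have h1 := (IsAlgClosed.splits f).eq_prod_roots
  have h2 : f.roots = Multiset.replicate (Multiset.card f.roots) 0 := by
    rw [Multiset.eq_replicate]
    refine ⟨rfl, fun b hb => h b ?_⟩
    exact (Polynomial.mem_roots hf).1 hb
  rw [h2] at h1
  simp only [Multiset.map_replicate, Multiset.prod_replicate, map_zero, sub_zero] at h1
  refine ⟨Multiset.card f.roots, fun j hj => ?_⟩
  rw [h1, Polynomial.coeff_C_mul, Polynomial.coeff_X_pow] at hj
  by_contra hne
  simp [hne] at hj

lemma finite_Supp [CharZero k] (P : MvPolynomial (Fin 2) k) : (Supp P).Finite := by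
  refine (P.support.finite_toSet.image fun s => (s 0, s 1)).subset ?_
  rintro ⟨i, j⟩ hp
  exact ⟨_, by simpa [Supp] using hp, by simp⟩

lemma wdeg_spec [CharZero k] (ρ σ : ℤ) (P : MvPolynomial (Fin 2) k) (hP : P ≠ 0) :
    (∃ p, p ∈ LeadSupp ρ σ P) ∧
      ∀ p ∈ Supp P, ρ * (p.1 : ℤ) + σ * (p.2 : ℤ) ≤ wdeg ρ σ P := by
  have hfin : {d : ℤ | ∃ p ∈ Supp P, d = ρ * (p.1 : ℤ) + σ * (p.2 : ℤ)}.Finite := by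
    refine ((finite_Supp P).image fun p => ρ * (p.1 : ℤ) + σ * (p.2 : ℤ)).subset ?_
    rintro d ⟨p, hp, rfl⟩
    exact ⟨p, hp, rfl⟩
  constructor
  · obtain ⟨s, hs⟩ := MvPolynomial.ne_zero_iff.1 hP
    have hsup : (s 0, s 1) ∈ Supp P := by
      have : Finsupp.single 0 (s 0) + Finsupp.single 1 (s 1) = s := by
        ext l; fin_cases l <;> simp
      simpa [Supp, this] using hs
    obtain ⟨p, hp, hpe⟩ := Int.csSup_mem
      (s := {d : ℤ | ∃ p ∈ Supp P, d = ρ * (p.1 : ℤ) + σ * (p.2 : ℤ)})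
      ⟨_, (s 0, s 1), hsup, rfl⟩ hfin.bddAbove
    exact ⟨p, hp, hpe.symm⟩
  · intro p hp
    exact le_csSup hfin.bddAbove ⟨p, hp, rfl⟩

lemma lead1 [CharZero k] (P Q : MvPolynomial (Fin 2) k) (c : k) (hc : c ≠ 0)
    (hPQ : Jb P Q = MvPolynomial.C c) : ∃ p : ℕ × ℕ, LeadSupp 1 (-1) P = {p} := by
  have hP : P ≠ 0 := by
    rintro rfl
    simp only [Jb, map_zero, zero_mul, mul_zero, sub_zero] at hPQ
    exact hc (MvPolynomial.C_eq_zero.1 hPQ.symm)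
  obtain ⟨⟨p, hp⟩, hle⟩ := wdeg_spec 1 (-1) P hP
  set m := wdeg 1 (-1) P with hm
  have hsupp : ∀ q ∈ LeadSupp 1 (-1) P, (fm m P).coeff q.2 ≠ 0 := by
    rintro ⟨i, j⟩ ⟨h1, h2⟩
    have : m = (i : ℤ) - j := by rw [hm, ← h2]; ring
    rw [this, fm_coeff]
    exact h1
  have hbig : ∀ m', m < m' → fm m' P = 0 := by
    intro m' hm'
    ext j
    rw [Polynomial.coeff_zero]
    by_cases hj : m' + j < 0
    · exact fm_coeff_neg _ _ hj _
    · obtain ⟨i, hi⟩ : ∃ i : ℕ, m' + j = i := ⟨(m' + j).toNat, by omega⟩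
      have : m' = (i : ℤ) - j := by omega
      rw [this, fm_coeff]
      by_contra hne
      have := hle (i, j) hne
      simp only at this
      omega
  have hf : fm m P ≠ 0 := by
    intro h0
    apply hsupp p hp
    simp [h0]
  let σ := algebraMap k (AlgebraicClosure k)
  have hσ : Function.Injective σ := σ.injective
  have hroot : ∀ a, ((fm m P).map σ).eval a = 0 → a = 0 := by
    intro a ha
    refine core2 (MvPolynomial.map σ P) (MvPolynomial.map σ Q) (σ c) a
      (by simpa using hc) ?_ m ?_ ?_ ?_
    · have := congrArg (MvPolynomial.map σ) hPQ
      simpa [Jb, pderiv_map] using this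
    · intro m' hm'
      rw [fm_map, hbig m' hm', Polynomial.map_zero]
    · rw [fm_map]
      exact (Polynomial.map_ne_zero_iff hσ).2 hf
    · rw [fm_map]
      exact ha
  obtain ⟨n, hn⟩ := monomial_of_roots _ ((Polynomial.map_ne_zero_iff hσ).2 hf) hroot
  have hq : ∀ q ∈ LeadSupp 1 (-1) P, q.2 = n := by
    intro q hq
    apply hn
    rw [Polynomial.coeff_map]
    simpa using hsupp q hq
  refine ⟨p, ?_⟩
  ext q
  rw [Set.mem_singleton_iff]
  constructor
  · intro h
    have e1 := hq q h
    have e2 := hq p hp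
    have e3 := h.2
    have e4 := hp.2
    ext <;> omega
  · rintro rfl
    exact hp

lemma Supp_swap [CharZero k] (P : MvPolynomial (Fin 2) k) (i j : ℕ) :
    (i, j) ∈ Supp (rename (Equiv.swap (0 : Fin 2) 1) P) ↔ (j, i) ∈ Supp P := by
  have h : Finsupp.single 0 i + Finsupp.single 1 j
      = Finsupp.mapDomain (Equiv.swap (0 : Fin 2) 1) (Finsupp.single 0 j + Finsupp.single 1 i) := by
    rw [Finsupp.mapDomain_add, Finsupp.mapDomain_single, Finsupp.mapDomain_single]
    simp [add_comm]
  simp only [Supp, Set.mem_ofPred_eq]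
  rw [h, coeff_rename_mapDomain _ (Equiv.injective _)]

lemma wdeg_swap [CharZero k] (P : MvPolynomial (Fin 2) k) :
    wdeg 1 (-1) (rename (Equiv.swap (0 : Fin 2) 1) P) = wdeg (-1) 1 P := by
  unfold wdeg
  congr 1
  ext d
  constructor
  · rintro ⟨⟨i, j⟩, h, rfl⟩
    exact ⟨(j, i), (Supp_swap P i j).1 h, by simp; ring⟩
  · rintro ⟨⟨i, j⟩, h, rfl⟩
    exact ⟨(j, i), (Supp_swap P j i).2 h, by simp; ring⟩

lemma lead2 [CharZero k] (P Q : MvPolynomial (Fin 2) k) (c : k) (hc : c ≠ 0)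
    (hPQ : Jb P Q = MvPolynomial.C c) : ∃ p : ℕ × ℕ, LeadSupp (-1) 1 P = {p} := by
  let τ := Equiv.swap (0 : Fin 2) 1
  have hτ : Function.Injective τ := τ.injective
  have h0 : ∀ F : MvPolynomial (Fin 2) k, pderiv 0 (rename τ F) = rename τ (pderiv 1 F) := by
    intro F
    have := pderiv_rename hτ 1 F
    simpa [τ] using this
  have h1 : ∀ F : MvPolynomial (Fin 2) k, pderiv 1 (rename τ F) = rename τ (pderiv 0 F) := by
    intro F
    have := pderiv_rename hτ 0 F
    simpa [τ] using this
  obtain ⟨⟨i, j⟩, hij⟩ := lead1 (rename τ P) (rename τ Q) (-c) (neg_ne_zero.2 hc) (by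
    have := congrArg (rename τ) hPQ
    simp only [Jb, map_sub, map_mul, rename_C] at this
    simp only [Jb, h0, h1, map_neg]
    linear_combination -this)
  refine ⟨(j, i), ?_⟩
  ext ⟨a, b⟩
  have := Set.ext_iff.1 hij (b, a)
  simp only [LeadSupp, Set.mem_ofPred_eq, Set.mem_singleton_iff, Prod.mk.injEq] at this ⊢
  rw [Supp_swap, wdeg_swap] at this
  rw [and_comm (a := a = j), ← this]
  refine and_congr_right fun _ => ?_
  constructor <;> intro h <;> linarith

end Helpers

/-- If `[P,Q]` is a nonzero constant, then the Newton polygon of `P` has no edge of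
slope 1: both `ℓ_{1,-1}(P)` and `ℓ_{-1,1}(P)` are monomials, i.e. their supports
consist of exactly one point. -/
theorem stmt2 (K : Type*) [Field K] [CharZero K] (P Q : MvPolynomial (Fin 2) K)
    (c : K) (hc : c ≠ 0) (hPQ : Jb P Q = MvPolynomial.C c) :
    (∃ p : ℕ × ℕ, LeadSupp 1 (-1) P = {p}) ∧ (∃ p : ℕ × ℕ, LeadSupp (-1) 1 P = {p}) := by
  exact ⟨lead1 P Q c hc hPQ, lead2 P Q c hc hPQ⟩

end
end

section
/- Let (ρ,σ) be a direction, let R₀ ∈ K[x,y] be a nonzero (ρ,σ)-homogeneous polynomial, let m, k be positive integers with m > 1 and m ∣ k, and set R := R₀^{k/m}. Assume there exist a (ρ,σ)-homogeneous polynomial H ∈ K[x,y], an integer s ≥ 1 and μ ∈ K∖{0} such that [H, R^m] = μ·R₀^s. Then there exist a (ρ,σ)-homogeneous polynomial G₁ ∈ K[x,y] and an integer i ≥ 0 such that [G₁, R] = R^i. -/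
open MvPolynomial

noncomputable section

variable {K : Type*} [Field K] [CharZero K]

theorem exists_of_mem_Supp_mul {K : Type*} [Field K] [CharZero K]
    {P Q : MvPolynomial (Fin 2) K} {p : ℕ × ℕ} (hp : p ∈ Supp (P * Q)) :
    ∃ a ∈ Supp P, ∃ b ∈ Supp Q, p.1 = a.1 + b.1 ∧ p.2 = a.2 + b.2 := by
  classical
  have key : ∀ u : Fin 2 →₀ ℕ, Finsupp.single 0 (u 0) + Finsupp.single 1 (u 1) = u := by
    intro u
    ext i
    fin_cases i <;> simp
  have h1 : coeff (Finsupp.single 0 p.1 + Finsupp.single 1 p.2) (P * Q) ≠ 0 := hp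
  rw [coeff_mul] at h1
  obtain ⟨⟨u, v⟩, huv, hne⟩ := Finset.exists_ne_zero_of_sum_ne_zero h1
  rw [Finset.HasAntidiagonal.mem_antidiagonal] at huv
  simp only at huv hne
  refine ⟨(u 0, u 1), ?_, (v 0, v 1), ?_, ?_, ?_⟩
  · show coeff (Finsupp.single 0 (u 0) + Finsupp.single 1 (u 1)) P ≠ 0
    rw [key]
    exact left_ne_zero_of_mul hne
  · show coeff (Finsupp.single 0 (v 0) + Finsupp.single 1 (v 1)) Q ≠ 0
    rw [key]
    exact right_ne_zero_of_mul hne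
  · have := DFunLike.congr_fun huv 0
    simpa using this.symm
  · have := DFunLike.congr_fun huv 1
    simpa using this.symm

theorem IsHomog_mul {K : Type*} [Field K] [CharZero K] {ρ σ : ℤ}
    {P Q : MvPolynomial (Fin 2) K} (hP : IsHomog ρ σ P) (hQ : IsHomog ρ σ Q) :
    IsHomog ρ σ (P * Q) := by
  intro p hp q hq
  obtain ⟨a, ha, b, hb, h1, h2⟩ := exists_of_mem_Supp_mul hp
  obtain ⟨c, hc, d, hd, h3, h4⟩ := exists_of_mem_Supp_mul hq
  have e1 := hP a ha c hc
  have e2 := hQ b hb d hd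
  rw [h1, h2, h3, h4]
  push_cast
  linear_combination e1 + e2

theorem IsHomog_C {K : Type*} [Field K] [CharZero K] (ρ σ : ℤ) (c : K) :
    IsHomog ρ σ (C c) := by
  have key : ∀ p ∈ Supp (C c : MvPolynomial (Fin 2) K), p.1 = 0 ∧ p.2 = 0 := by
    intro p hp
    have h1 : coeff (Finsupp.single 0 p.1 + Finsupp.single 1 p.2)
      (C c : MvPolynomial (Fin 2) K) ≠ 0 := hp
    classical
    rw [coeff_C] at h1
    have h2 : (0 : Fin 2 →₀ ℕ) = Finsupp.single 0 p.1 + Finsupp.single 1 p.2 := by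
      by_contra h
      exact h1 (if_neg h)
    have h3 := DFunLike.congr_fun h2 0
    have h4 := DFunLike.congr_fun h2 1
    simp at h3 h4
    exact ⟨h3.symm, h4.symm⟩
  intro p hp q hq
  rw [(key p hp).1, (key p hp).2, (key q hq).1, (key q hq).2]

theorem IsHomog_pow {K : Type*} [Field K] [CharZero K] {ρ σ : ℤ}
    {P : MvPolynomial (Fin 2) K} (hP : IsHomog ρ σ P) (n : ℕ) : IsHomog ρ σ (P ^ n) := by
  induction n with
  | zero => simpa using IsHomog_C ρ σ (1 : K)
  | succ n ih => rw [pow_succ]; exact IsHomog_mul ih hP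

/-- If `R₀` is a nonzero `(ρ,σ)`-homogeneous polynomial, `m>1`, `m ∣ k`,
`R = R₀^(k/m)`, and `[H, R^m] = μ·R₀^s` for a `(ρ,σ)`-homogeneous `H`, `s ≥ 1` and
`μ ≠ 0`, then there are a `(ρ,σ)`-homogeneous `G₁` and `i ≥ 0` with `[G₁,R]=R^i`. -/
theorem stmt4 (K : Type*) [Field K] [CharZero K]
    (ρ σ : ℤ) (hgcd : Int.gcd ρ σ = 1)
    (R₀ : MvPolynomial (Fin 2) K) (hR₀ : R₀ ≠ 0) (hhomR₀ : IsHomog ρ σ R₀)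
    (m k : ℕ) (hm : 1 < m) (hk : 1 ≤ k) (hdvd : m ∣ k)
    (H : MvPolynomial (Fin 2) K) (hhomH : IsHomog ρ σ H)
    (s : ℕ) (hs : 1 ≤ s) (μ : K) (hμ : μ ≠ 0)
    (hbr : Jb H ((R₀ ^ (k / m)) ^ m) = MvPolynomial.C μ * R₀ ^ s) :
    ∃ (G₁ : MvPolynomial (Fin 2) K) (i : ℕ), IsHomog ρ σ G₁ ∧
      Jb G₁ (R₀ ^ (k / m)) = (R₀ ^ (k / m)) ^ i := by
  set e := k / m with he
  have he1 : 1 ≤ e := Nat.div_pos (Nat.le_of_dvd hk hdvd) (by omega)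
  obtain ⟨n, rfl⟩ : ∃ n, m = n + 1 := ⟨m - 1, by omega⟩
  obtain ⟨t, ht⟩ : ∃ t, s + t = e * (s + n) :=
    ⟨e * (s + n) - s, by have : s ≤ e * (s + n) := by nlinarith
                         omega⟩
  have hm0 : ((n + 1 : ℕ) : K) ≠ 0 := Nat.cast_ne_zero.mpr (by omega)
  refine ⟨C (((n + 1 : ℕ) : K) / μ) * (H * R₀ ^ t), s,
    IsHomog_mul (IsHomog_C _ _ _) (IsHomog_mul hhomH (IsHomog_pow hhomR₀ t)), ?_⟩
  have hne : C ((n + 1 : ℕ) : K) * (R₀ ^ e) ^ n ≠ 0 :=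
    mul_ne_zero (by simpa only [ne_eq, C_eq_zero] using hm0) (pow_ne_zero _ (pow_ne_zero _ hR₀))
  apply mul_left_cancel₀ hne
  have hpow : R₀ ^ s * R₀ ^ t = (R₀ ^ e) ^ n * (R₀ ^ e) ^ s := by
    rw [← pow_add, ht, ← pow_add, ← pow_mul, add_comm n s]
  have hC : C (((n + 1 : ℕ) : K) / μ) * C μ = (C ((n + 1 : ℕ) : K) : MvPolynomial (Fin 2) K) := by
    rw [← C_mul, div_mul_cancel₀ _ hμ]
  have hnC : (C ((n + 1 : ℕ) : K) : MvPolynomial (Fin 2) K) = (n : MvPolynomial (Fin 2) K) + 1 := by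
    simp
  -- the bracket of a power of `R₀` with a power of `R₀` vanishes
  have hz : pderiv 0 (R₀ ^ t) * pderiv 1 (R₀ ^ e) - pderiv 0 (R₀ ^ e) * pderiv 1 (R₀ ^ t) = 0 := by
    simp only [Derivation.leibniz_pow, nsmul_eq_mul, smul_eq_mul]
    ring
  unfold Jb at hbr ⊢
  rw [Derivation.leibniz_pow _ (R₀ ^ e), Derivation.leibniz_pow _ (R₀ ^ e)] at hbr
  simp only [Derivation.leibniz, pderiv_C, nsmul_eq_mul, smul_eq_mul, mul_zero, add_zero,
    Nat.add_sub_cancel] at hbr ⊢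
  generalize pderiv 0 (R₀ ^ e) = a at *
  generalize pderiv 1 (R₀ ^ e) = b at *
  generalize pderiv 0 (R₀ ^ t) = c at *
  generalize pderiv 1 (R₀ ^ t) = d at *
  generalize C (((n + 1 : ℕ) : K) / μ) = A at *
  rw [hnC] at hC ⊢
  push_cast at hbr
  linear_combination A * R₀ ^ t * hbr + R₀ ^ s * R₀ ^ t * hC + (n + 1) * hpow +
    (n + 1) * (R₀ ^ e) ^ n * A * H * hz

end
end

section
/- Let (a₀,b₀) = (k,0) + j·(2,1) = (k+2j, j) with integers k ≥ 1 and j ≥ 1. Then there exist (1,−2)-homogeneous polynomials R, G ∈ K[x,y] such that R is not a monomial, en_{1,−2}(R) = (a₀,b₀), and [G,R] = R². (Explicitly, R := x^k(1+x²y)^j and G := −(1/(j+k))·x^{k−1}(1+x²y)^{j+1} have these properties.) -/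
open MvPolynomial

noncomputable section

variable {K : Type*} [Field K] [CharZero K]

/-- The polynomial `x^k (1 + x^2 y)^j`. -/
def Rpoly (K : Type*) [Field K] (k j : ℕ) : MvPolynomial (Fin 2) K :=
  X 0 ^ k * (1 + X 0 ^ 2 * X 1) ^ j

theorem expo_eq (a b k i : ℕ) :
    (Finsupp.single (0 : Fin 2) (k + 2 * i) + Finsupp.single 1 i
      = Finsupp.single (0 : Fin 2) a + Finsupp.single 1 b) ↔ (a = k + 2 * i ∧ b = i) := by
  constructor
  · intro h
    have h0 := DFunLike.congr_fun h 0
    have h1 := DFunLike.congr_fun h 1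
    simp at h0 h1
    exact ⟨h0.symm, h1.symm⟩
  · rintro ⟨rfl, rfl⟩
    rfl

theorem Rpoly_eq (K : Type*) [Field K] (k j : ℕ) :
    Rpoly K k j = ∑ i ∈ Finset.range (j + 1),
      monomial (Finsupp.single (0 : Fin 2) (k + 2 * i) + Finsupp.single 1 i) (j.choose i : K) := by
  unfold Rpoly
  rw [add_comm, add_pow, Finset.mul_sum]
  refine Finset.sum_congr rfl fun i _ => ?_
  have h : (monomial (Finsupp.single (0 : Fin 2) (k + 2 * i) + Finsupp.single 1 i) (j.choose i : K))
      = C (j.choose i : K) * (X 0 ^ (k + 2 * i) * X 1 ^ i) := by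
    rw [X_pow_eq_monomial, X_pow_eq_monomial, monomial_mul, C_mul_monomial]
    simp
  rw [h]
  simp only [one_pow, mul_one, map_natCast]
  ring

theorem coeff_Rpoly (K : Type*) [Field K] (k j a b : ℕ) :
    coeff (Finsupp.single 0 a + Finsupp.single 1 b) (Rpoly K k j)
      = if a = k + 2 * b then (j.choose b : K) else 0 := by
  rw [Rpoly_eq, coeff_sum]
  simp only [coeff_monomial, expo_eq]
  split_ifs with h
  · subst h
    rw [Finset.sum_eq_single b]
    · simp
    · intro i _ hi
      rw [if_neg]
      rintro ⟨_, rfl⟩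
      exact hi rfl
    · intro hb
      have : j < b := by simpa using hb
      simp [Nat.choose_eq_zero_of_lt this]
  · refine Finset.sum_eq_zero fun i _ => ?_
    rw [if_neg]
    rintro ⟨h1, rfl⟩
    exact h h1

theorem mem_Supp_Rpoly (K : Type*) [Field K] [CharZero K] (k j : ℕ) (p : ℕ × ℕ) :
    p ∈ Supp (Rpoly K k j) ↔ p.1 = k + 2 * p.2 ∧ p.2 ≤ j := by
  unfold Supp
  rw [Set.mem_ofPred_eq, coeff_Rpoly]
  by_cases h : p.1 = k + 2 * p.2
  · simp [h, Nat.choose_eq_zero_iff]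
  · simp [h]

theorem Jb_Rpoly (K : Type*) [Field K] [CharZero K] (m j : ℕ) (hj : 1 ≤ j) :
    Jb (Rpoly K m (j + 1)) (Rpoly K (m + 1) j)
      = C (-((j : K) + m + 1)) * Rpoly K (m + 1) j ^ 2 := by
  obtain ⟨n, rfl⟩ : ∃ n, j = n + 1 := ⟨j - 1, by omega⟩
  have h01 : pderiv (R := K) (0 : Fin 2) (X 1) = 0 := pderiv_X_of_ne (by decide)
  have h10 : pderiv (R := K) (1 : Fin 2) (X 0) = 0 := pderiv_X_of_ne (by decide)
  unfold Jb Rpoly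
  cases m <;>
  · simp only [Derivation.leibniz, Derivation.leibniz_pow, map_add, pderiv_X_self, h01, h10,
      Derivation.map_one_eq_zero, smul_eq_mul, nsmul_eq_mul, map_neg, map_natCast, map_one,
      Nat.add_sub_cancel, pow_zero, mul_one, Nat.cast_add, Nat.cast_one, Nat.cast_zero, zero_add]
    simp
    ring

/-- For `(a₀,b₀)=(k+2j, j)` with `k,j ≥ 1` there are `(1,-2)`-homogeneous
polynomials `R, G` with `R` not a monomial, `en_{1,-2}(R)=(a₀,b₀)` and `[G,R]=R²`. -/
theorem stmt5 (K : Type*) [Field K] [CharZero K] (k j : ℕ) (hk : 1 ≤ k) (hj : 1 ≤ j) :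
    ∃ R G : MvPolynomial (Fin 2) K, IsHomog 1 (-2) R ∧ IsHomog 1 (-2) G ∧
      ¬ IsMonomial R ∧ IsEn 1 (-2) R (k + 2 * j, j) ∧ Jb G R = R ^ 2 := by
  obtain ⟨m, rfl⟩ : ∃ m, k = m + 1 := ⟨k - 1, by omega⟩
  have hc : ((j : K) + m + 1) ≠ 0 := by exact_mod_cast Nat.succ_ne_zero (j + m)
  refine ⟨Rpoly K (m + 1) j, C (-((j : K) + m + 1)⁻¹) * Rpoly K m (j + 1), ?_, ?_, ?_, ?_, ?_⟩
  · intro p hp q hq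
    rw [mem_Supp_Rpoly] at hp hq
    omega
  · have key : ∀ p ∈ Supp (C (-((j : K) + m + 1)⁻¹) * Rpoly K m (j + 1)),
        p ∈ Supp (Rpoly K m (j + 1)) := by
      intro p hp
      unfold Supp at hp ⊢
      rw [Set.mem_ofPred_eq, coeff_C_mul] at hp
      exact right_ne_zero_of_mul hp
    intro p hp q hq
    have hp' := key p hp
    have hq' := key q hq
    rw [mem_Supp_Rpoly] at hp' hq'
    omega
  · intro h
    have h0 : ((m + 1, 0) : ℕ × ℕ) ∈ Supp (Rpoly K (m + 1) j) := by
      rw [mem_Supp_Rpoly]; simp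
    have h1 : ((m + 1 + 2, 1) : ℕ × ℕ) ∈ Supp (Rpoly K (m + 1) j) := by
      rw [mem_Supp_Rpoly]; simpa using hj
    have := congrArg Prod.snd (h h0 h1)
    simp at this
  · have hmem : ((m + 1 + 2 * j, j) : ℕ × ℕ) ∈ Supp (Rpoly K (m + 1) j) := by
      rw [mem_Supp_Rpoly]; simp
    have hset : {d : ℤ | ∃ p ∈ Supp (Rpoly K (m + 1) j), d = 1 * (p.1 : ℤ) + (-2) * (p.2 : ℤ)}
        = {((m : ℤ) + 1)} := by
      ext d
      simp only [Set.mem_ofPred_eq, Set.mem_singleton_iff]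
      constructor
      · rintro ⟨p, hp, rfl⟩
        rw [mem_Supp_Rpoly] at hp
        omega
      · rintro rfl
        exact ⟨_, hmem, by push_cast; ring⟩
    refine ⟨⟨hmem, ?_⟩, ?_⟩
    · rw [wdeg, hset, csSup_singleton]
      push_cast
      ring
    · intro q hq
      have := hq.1
      rw [mem_Supp_Rpoly] at this
      exact this.2
  · have hJ : Jb (C (-((j : K) + m + 1)⁻¹) * Rpoly K m (j + 1)) (Rpoly K (m + 1) j)
        = C (-((j : K) + m + 1)⁻¹) * Jb (Rpoly K m (j + 1)) (Rpoly K (m + 1) j) := by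
      unfold Jb
      rw [pderiv_C_mul, pderiv_C_mul]
      ring
    rw [hJ, Jb_Rpoly K m j hj, ← mul_assoc, ← C_mul, neg_mul_neg, inv_mul_cancel₀ hc, C_1, one_mul]

end
end

section
/- Let (ρ,σ) be a direction with ρ > 0 and ρ + σ < 0, let R, G₁ ∈ K[x,y] be nonzero (ρ,σ)-homogeneous polynomials, and let i ≥ 0 be an integer with [R,G₁] = R^i. Set u := v_{ρ,σ}(R) and v := v_{ρ,σ}(G₁), and define univariate polynomials r, g ∈ K[z] by r := Σ_{(α,β)∈Supp(R)} R_{α,β}·z^β and g := Σ_{(α,β)∈Supp(G₁)} (G₁)_{α,β}·z^β, where R_{α,β} and (G₁)_{α,β} are the coefficients of x^α y^β (these are well defined: by homogeneity and ρ ≠ 0 the second coordinate determines the point of the support). Then ρ·r^i = u·g′·r − v·r′·g holds in K[z]. -/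
open MvPolynomial

noncomputable section

variable {K : Type*} [Field K] [CharZero K]

/-- The univariate polynomial `r ∈ K[z]` associated to a `(ρ,σ)`-homogeneous `P`:
`r = Σ_{(α,β) ∈ Supp P} P_{α,β} z^β`. -/
def ypoly (P : MvPolynomial (Fin 2) K) : Polynomial K :=
  ∑ m ∈ P.support, Polynomial.C (MvPolynomial.coeff m P) * Polynomial.X ^ (m 1)

/-- The evaluation `x ↦ 1`, `y ↦ X`. -/
def phi (K : Type*) [Field K] : MvPolynomial (Fin 2) K →ₐ[K] Polynomial K :=
  MvPolynomial.aeval ![1, Polynomial.X]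

theorem phi_monomial (K : Type*) [Field K] (m : Fin 2 →₀ ℕ) (a : K) :
    phi K (monomial m a) = Polynomial.C a * Polynomial.X ^ (m 1) := by
  simp [phi, MvPolynomial.aeval_monomial, Finsupp.prod_fintype]

theorem phi_eq (K : Type*) [Field K] (P : MvPolynomial (Fin 2) K) :
    phi K P = ypoly P := by
  conv_lhs => rw [P.as_sum]
  simp only [map_sum, phi_monomial, ypoly]

theorem phi_pderiv_one (K : Type*) [Field K] (P : MvPolynomial (Fin 2) K) :
    phi K (pderiv 1 P) = Polynomial.derivative (phi K P) := by
  induction P using MvPolynomial.induction_on' with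
  | monomial m a =>
    rw [pderiv_monomial, phi_monomial, phi_monomial]
    simp [Polynomial.derivative_X_pow, mul_assoc]
  | add p q hp hq => simp [hp, hq]

theorem wdeg_spec_s6 (K : Type*) [Field K] (ρ σ : ℤ) (P : MvPolynomial (Fin 2) K)
    (h : IsHomog ρ σ P) (m : Fin 2 →₀ ℕ) (hm : m ∈ P.support) :
    wdeg ρ σ P = ρ * (m 0 : ℤ) + σ * (m 1 : ℤ) := by
  have hS : (m 0, m 1) ∈ Supp P := by
    have : (Finsupp.single 0 (m 0) + Finsupp.single 1 (m 1) : Fin 2 →₀ ℕ) = m := by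
      ext j; fin_cases j <;> simp
    simp only [Supp, Set.mem_setOf_eq, this]
    exact MvPolynomial.mem_support_iff.mp hm
  have : {d : ℤ | ∃ p ∈ Supp P, d = ρ * (p.1 : ℤ) + σ * (p.2 : ℤ)}
      = {ρ * (m 0 : ℤ) + σ * (m 1 : ℤ)} := by
    ext d
    constructor
    · rintro ⟨p, hp, rfl⟩
      exact h p hp _ hS
    · rintro rfl
      exact ⟨_, hS, rfl⟩
  rw [wdeg, this, csSup_singleton]

theorem euler (K : Type*) [Field K] (ρ σ w : ℤ) (P : MvPolynomial (Fin 2) K)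
    (h : ∀ m ∈ P.support, w = ρ * (m 0 : ℤ) + σ * (m 1 : ℤ)) :
    (ρ : Polynomial K) * phi K (pderiv 0 P)
      + (σ : Polynomial K) * Polynomial.X * phi K (pderiv 1 P) = (w : Polynomial K) * phi K P := by
  rw [P.as_sum]
  simp only [map_sum, Finset.mul_sum, ← Finset.sum_add_distrib]
  refine Finset.sum_congr rfl fun m hm => ?_
  rw [h m hm, pderiv_monomial, pderiv_monomial, phi_monomial, phi_monomial, phi_monomial]
  rcases Nat.eq_zero_or_pos (m 1) with h1 | h1
  · simp [h1]; ring
  · obtain ⟨k, hk⟩ : ∃ k, m 1 = k + 1 := ⟨m 1 - 1, by omega⟩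
    simp [hk]; ring

/-- Lemma "factores en jacobiano"(1): if `[R,G₁] = R^i` with `R, G₁` nonzero
`(ρ,σ)`-homogeneous, `u = v_{ρ,σ}(R)`, `v = v_{ρ,σ}(G₁)`, then
`ρ·r^i = u·g'·r − v·r'·g` in `K[z]`. -/
theorem stmt6 (K : Type*) [Field K] [CharZero K]
    (ρ σ : ℤ) (hgcd : Int.gcd ρ σ = 1) (hρ : 0 < ρ) (hρσ : ρ + σ < 0)
    (R G₁ : MvPolynomial (Fin 2) K) (hR : R ≠ 0) (hG : G₁ ≠ 0)
    (hhomR : IsHomog ρ σ R) (hhomG : IsHomog ρ σ G₁)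
    (i : ℕ) (hbr : Jb R G₁ = R ^ i) :
    (ρ : Polynomial K) * (ypoly R) ^ i
      = (wdeg ρ σ R : Polynomial K) * Polynomial.derivative (ypoly G₁) * ypoly R
        - (wdeg ρ σ G₁ : Polynomial K) * Polynomial.derivative (ypoly R) * ypoly G₁ := by
  have eR := euler K ρ σ _ R (wdeg_spec_s6 K ρ σ R hhomR)
  have eG := euler K ρ σ _ G₁ (wdeg_spec_s6 K ρ σ G₁ hhomG)
  have hb := congrArg (phi K) hbr
  simp only [Jb, map_sub, map_mul, map_pow] at hb
  rw [phi_pderiv_one] at eR eG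
  rw [phi_pderiv_one, phi_pderiv_one] at hb
  rw [← phi_eq, ← phi_eq, ← hb]
  linear_combination Polynomial.derivative (phi K G₁) * eR
    - Polynomial.derivative (phi K R) * eG

end
end

section
/- Assume K is algebraically closed. Let (ρ,σ) be a direction with ρ > 0 and ρ + σ < 0, let R, G₁ ∈ K[x,y] be nonzero (ρ,σ)-homogeneous polynomials with [R,G₁] = R², set u := v_{ρ,σ}(R), v := v_{ρ,σ}(G₁), and let r, g ∈ K[z] be defined by r := Σ_{(α,β)∈Supp(R)} R_{α,β}·z^β and g := Σ_{(α,β)∈Supp(G₁)} (G₁)_{α,β}·z^β. If deg(g) ≤ deg(r) + 1 and r has at least two distinct roots in K, then there exists a root λ of r such that u·t − v·s = 0, where s is the multiplicity of λ as a root of r and t is the multiplicity of λ as a root of g. -/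
open MvPolynomial

noncomputable section

variable {K : Type*} [Field K] [CharZero K]

theorem ypoly_eq_aeval {K : Type*} [Field K] [CharZero K] (P : MvPolynomial (Fin 2) K) :
    ypoly P = aeval ![(1 : Polynomial K), Polynomial.X] P := by
  rw [MvPolynomial.aeval_def, MvPolynomial.eval₂_eq']
  simp [ypoly, Fin.prod_univ_two]

theorem derivative_aeval_aux {K : Type*} [Field K] [CharZero K] (P : MvPolynomial (Fin 2) K) :
    Polynomial.derivative (aeval ![(1 : Polynomial K), Polynomial.X] P)
      = aeval ![(1 : Polynomial K), Polynomial.X] (pderiv 1 P) := by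
  induction P using MvPolynomial.induction_on with
  | C a => simp
  | add p q hp hq => simp [hp, hq]
  | mul_X p i hp =>
    fin_cases i
    · simp [hp, Derivation.leibniz, pderiv_X]
    · simp [hp, Derivation.leibniz, pderiv_X]
      ring

theorem euler_aux {K : Type*} [Field K] [CharZero K] (ρ σ u : ℤ) (P : MvPolynomial (Fin 2) K)
    (h : ∀ m ∈ P.support, ρ * (m 0 : ℤ) + σ * (m 1 : ℤ) = u) :
    (ρ : MvPolynomial (Fin 2) K) * (X 0 * pderiv 0 P) + (σ : MvPolynomial (Fin 2) K) * (X 1 * pderiv 1 P)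
      = (u : MvPolynomial (Fin 2) K) * P := by
  have key : ∀ (m : Fin 2 →₀ ℕ) (c : K) (i : Fin 2),
      X i * pderiv i (monomial m c) = (m i : MvPolynomial (Fin 2) K) * monomial m c := by
    intro m c i
    rw [X_mul_pderiv_monomial, nsmul_eq_mul]
  conv_lhs => rw [P.as_sum]
  conv_rhs => rw [P.as_sum]
  simp only [map_sum, Finset.mul_sum, ← Finset.sum_add_distrib]
  refine Finset.sum_congr rfl fun m hm => ?_
  rw [key, key, ← h m hm]
  push_cast
  ring

theorem mem_Supp_of_support {K : Type*} [Field K] [CharZero K] (P : MvPolynomial (Fin 2) K)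
    (m : Fin 2 →₀ ℕ) (hm : m ∈ P.support) : (m 0, m 1) ∈ Supp P := by
  have : Finsupp.single 0 (m 0) + Finsupp.single 1 (m 1) = m := by
    ext i
    fin_cases i <;> simp
  simpa [Supp, this] using hm

theorem wdeg_eq_aux {K : Type*} [Field K] [CharZero K] (ρ σ : ℤ) (P : MvPolynomial (Fin 2) K)
    (h : IsHomog ρ σ P) (m : Fin 2 →₀ ℕ) (hm : m ∈ P.support) :
    ρ * (m 0 : ℤ) + σ * (m 1 : ℤ) = wdeg ρ σ P := by
  have hs : {d : ℤ | ∃ p ∈ Supp P, d = ρ * (p.1 : ℤ) + σ * (p.2 : ℤ)}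
      = {ρ * (m 0 : ℤ) + σ * (m 1 : ℤ)} := by
    ext d
    constructor
    · rintro ⟨p, hp, rfl⟩
      exact h p hp _ (mem_Supp_of_support P m hm)
    · intro hd
      exact ⟨_, mem_Supp_of_support P m hm, hd⟩
  rw [wdeg, hs, csSup_singleton]

theorem ypoly_ne_zero {K : Type*} [Field K] [CharZero K] (ρ σ : ℤ) (hρ : 0 < ρ)
    (P : MvPolynomial (Fin 2) K) (hP : P ≠ 0) (h : IsHomog ρ σ P) : ypoly P ≠ 0 := by
  obtain ⟨m, hm⟩ := MvPolynomial.support_nonempty.mpr hP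
  intro h0
  have hc : (ypoly P).coeff (m 1) = MvPolynomial.coeff m P := by
    rw [ypoly, Polynomial.finsetSum_coeff, Finset.sum_eq_single m]
    · simp
    · intro n hn hne
      rw [Polynomial.coeff_C_mul_X_pow, if_neg]
      intro h1
      apply hne
      have e := (wdeg_eq_aux ρ σ P h m hm).trans (wdeg_eq_aux ρ σ P h n hn).symm
      rw [h1] at e
      have e2 : (m 0 : ℤ) = n 0 := mul_left_cancel₀ hρ.ne' (by linarith)
      ext i
      fin_cases i
      · exact_mod_cast e2.symm
      · exact h1.symm
    · intro h; exact absurd hm h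
  rw [h0] at hc
  exact (MvPolynomial.mem_support_iff.mp hm) (by simpa using hc.symm)

theorem ode_aux {K : Type*} [Field K] [CharZero K] (ρ σ : ℤ)
    (R G : MvPolynomial (Fin 2) K) (hhomR : IsHomog ρ σ R) (hhomG : IsHomog ρ σ G)
    (hbr : Jb R G = R ^ 2) :
    (wdeg ρ σ R : Polynomial K) * ypoly R * Polynomial.derivative (ypoly G)
      - (wdeg ρ σ G : Polynomial K) * ypoly G * Polynomial.derivative (ypoly R)
      = (ρ : Polynomial K) * ypoly R ^ 2 := by
  have e1 := congrArg (aeval (R := K) ![(1 : Polynomial K), Polynomial.X])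
    (euler_aux ρ σ _ R (wdeg_eq_aux ρ σ R hhomR))
  have e2 := congrArg (aeval (R := K) ![(1 : Polynomial K), Polynomial.X])
    (euler_aux ρ σ _ G (wdeg_eq_aux ρ σ G hhomG))
  have e3 := congrArg (aeval (R := K) ![(1 : Polynomial K), Polynomial.X]) hbr
  simp only [Jb, map_add, map_sub, map_mul, map_pow, map_intCast, aeval_X,
    Matrix.cons_val_zero, Matrix.cons_val_one, one_mul, ← derivative_aeval_aux] at e1 e2 e3
  simp only [← ypoly_eq_aeval] at e1 e2 e3
  linear_combination (-Polynomial.derivative (ypoly G)) * e1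
    + Polynomial.derivative (ypoly R) * e2 + (ρ : Polynomial K) * e3

theorem mult_aux {K : Type*} [Field K] [CharZero K] (u v ρ : ℤ) (hρ : ρ ≠ 0)
    (r g : Polynomial K) (hr : r ≠ 0) (hg : g ≠ 0)
    (h : (u : Polynomial K) * r * Polynomial.derivative g
      - (v : Polynomial K) * g * Polynomial.derivative r = (ρ : Polynomial K) * r ^ 2)
    (l : K) (hne : u * (g.rootMultiplicity l : ℤ) - v * (r.rootMultiplicity l : ℤ) ≠ 0) :
    g.rootMultiplicity l = r.rootMultiplicity l + 1 := by
  obtain ⟨a, ha, ha'⟩ := Polynomial.exists_eq_pow_rootMultiplicity_mul_and_not_dvd r hr l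
  obtain ⟨b, hb, hb'⟩ := Polynomial.exists_eq_pow_rootMultiplicity_mul_and_not_dvd g hg l
  rw [Polynomial.dvd_iff_isRoot, Polynomial.IsRoot.def] at ha' hb'
  generalize r.rootMultiplicity l = s at *
  generalize g.rootMultiplicity l = t at *
  set L : Polynomial K := Polynomial.X - Polynomial.C l with hL
  have hd : ∀ n : ℕ, L * Polynomial.derivative (L ^ n) = (n : Polynomial K) * L ^ n := by
    intro n
    cases n with
    | zero => simp
    | succ n => simp [Polynomial.derivative_pow, hL]; ring
  have hLe : L.eval l = 0 := by simp [hL]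
  set c : Polynomial K := (u : Polynomial K) * a * (t * b + L * Polynomial.derivative b)
    - (v : Polynomial K) * b * (s * a + L * Polynomial.derivative a) with hc
  have key : L ^ (s + t) * c = L ^ (2 * s + 1) * ((ρ : Polynomial K) * a ^ 2) := by
    have h1 := hd s
    have h2 := hd t
    have h3 := congrArg (L * ·) h
    simp only [ha, hb, Polynomial.derivative_mul] at h3
    rw [hc]
    linear_combination h3 - (u : Polynomial K) * L ^ s * a * b * h2
      + (v : Polynomial K) * L ^ t * a * b * h1
  have hce : c.eval l ≠ 0 := by
    have : c.eval l = ((u * (t : ℤ) - v * (s : ℤ) : ℤ) : K) * (a.eval l * b.eval l) := by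
      rw [hc]; simp [hLe]; ring
    rw [this]
    exact mul_ne_zero (by exact_mod_cast hne) (mul_ne_zero ha' hb')
  have hde : ((ρ : Polynomial K) * a ^ 2).eval l ≠ 0 := by
    simp [ha', hρ]
  have hL0 : L ≠ 0 := Polynomial.X_sub_C_ne_zero l
  clear_value c L
  generalize (ρ : Polynomial K) * a ^ 2 = d at key hde
  clear hc
  rcases lt_trichotomy (s + t) (2 * s + 1) with hlt | heq | hgt
  · exfalso
    obtain ⟨k, hk⟩ := Nat.exists_eq_add_of_lt hlt
    have key2 : L ^ (s + t) * c = L ^ (s + t) * (L ^ (k + 1) * d) := by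
      rw [← mul_assoc, ← pow_add, ← add_assoc, ← hk]
      exact key
    have := congrArg (Polynomial.eval l) (mul_left_cancel₀ (pow_ne_zero (s + t) hL0) key2)
    apply hce
    rw [this]; simp [hLe]
  · omega
  · exfalso
    obtain ⟨k, hk⟩ := Nat.exists_eq_add_of_lt hgt
    have key2 : L ^ (2 * s + 1) * d = L ^ (2 * s + 1) * (L ^ (k + 1) * c) := by
      rw [← mul_assoc, ← pow_add, ← add_assoc, ← hk]
      exact key.symm
    have := congrArg (Polynomial.eval l) (mul_left_cancel₀ (pow_ne_zero (2 * s + 1) hL0) key2)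
    apply hde
    rw [this]; simp [hLe]

/-- Lemma "factores en jacobiano"(3): if `[R,G₁]=R²`, `deg g ≤ deg r + 1` and `r`
has at least two distinct roots, then some root `λ` of `r` satisfies `u·t − v·s = 0`,
where `s,t` are the multiplicities of `λ` in `r` and `g`. -/
theorem stmt7 (K : Type*) [Field K] [CharZero K] [IsAlgClosed K]
    (ρ σ : ℤ) (hgcd : Int.gcd ρ σ = 1) (hρ : 0 < ρ) (hρσ : ρ + σ < 0)
    (R G₁ : MvPolynomial (Fin 2) K) (hR : R ≠ 0) (hG : G₁ ≠ 0)
    (hhomR : IsHomog ρ σ R) (hhomG : IsHomog ρ σ G₁)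
    (hbr : Jb R G₁ = R ^ 2)
    (hdeg : (ypoly G₁).natDegree ≤ (ypoly R).natDegree + 1)
    (hroots : ∃ lam₁ lam₂ : K, lam₁ ≠ lam₂ ∧ (ypoly R).IsRoot lam₁ ∧ (ypoly R).IsRoot lam₂) :
    ∃ lam : K, (ypoly R).IsRoot lam ∧
      wdeg ρ σ R * ((ypoly G₁).rootMultiplicity lam : ℤ)
        - wdeg ρ σ G₁ * ((ypoly R).rootMultiplicity lam : ℤ) = 0 := by
  have hr := ypoly_ne_zero ρ σ hρ R hR hhomR
  have hg := ypoly_ne_zero ρ σ hρ G₁ hG hhomG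
  have hode := ode_aux ρ σ R G₁ hhomR hhomG hbr
  by_contra hcon
  push Not at hcon
  have ht : ∀ l, (ypoly R).IsRoot l →
      (ypoly G₁).rootMultiplicity l = (ypoly R).rootMultiplicity l + 1 := fun l hl =>
    mult_aux _ _ ρ hρ.ne' _ _ hr hg hode l (hcon l hl)
  obtain ⟨l₁, l₂, hl, h1, h2⟩ := hroots
  classical
  have hle : (ypoly R).roots + ({l₁, l₂} : Finset K).val ≤ (ypoly G₁).roots := by
    rw [Multiset.le_iff_count]
    intro l
    rw [Multiset.count_add, Polynomial.count_roots, Polynomial.count_roots]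
    by_cases hroot : (ypoly R).IsRoot l
    · rw [ht l hroot]
      have := Multiset.nodup_iff_count_le_one.mp ({l₁, l₂} : Finset K).nodup l
      omega
    · rw [Polynomial.rootMultiplicity_eq_zero hroot, Multiset.count_eq_zero_of_notMem]
      · simp
      · intro hm
        rw [Finset.mem_val, Finset.mem_insert, Finset.mem_singleton] at hm
        rcases hm with rfl | rfl
        · exact hroot h1
        · exact hroot h2
  have hcard := Multiset.card_le_card hle
  rw [Multiset.card_add, Finset.card_val, Finset.card_pair hl,
    ← (IsAlgClosed.splits (ypoly R)).natDegree_eq_card_roots] at hcard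
  have := Polynomial.card_roots' (ypoly G₁)
  omega

end
end

section
/- Let (ρ,σ) be a direction with ρ > 0 and ρ + σ < 0, let i ≥ 0 and n ≥ 2 be integers, and let R, G₁ ∈ K[x,y] be (ρ,σ)-homogeneous polynomials with R ≠ 0 such that [R,G₁] = R^i and (n−1)·v_{ρ,σ}(R) + ρ + σ ≥ 0. Then there exists a (ρ,σ)-homogeneous polynomial G₂ ∈ K[x,y] such that [R,G₂] = R^n. -/
open MvPolynomial

noncomputable section

variable {K : Type*} [Field K] [CharZero K]

set_option linter.unusedSectionVars false

lemma aux_comm (P : MvPolynomial (Fin 2) K) :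
    pderiv 0 (pderiv 1 P) = pderiv 1 (pderiv 0 P) := by
  ext m
  simp only [coeff_pderiv]
  rw [add_right_comm]
  simp
  ring

lemma aux_coeff_X_mul (j : Fin 2) (P : MvPolynomial (Fin 2) K) (m : Fin 2 →₀ ℕ) :
    coeff m (X j * pderiv j P) = (m j : K) * coeff m P := by
  classical
  induction P using MvPolynomial.induction_on' with
  | add p q hp hq => simp only [map_add, mul_add, coeff_add, hp, hq]
  | monomial n a =>
    rw [X_mul_pderiv_monomial, coeff_smul, coeff_monomial]
    split_ifs with h
    · simp [h]
    · simp

/-- The Euler operator. -/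
def EulerOp (ρ σ : ℤ) (P : MvPolynomial (Fin 2) K) : MvPolynomial (Fin 2) K :=
  (ρ : MvPolynomial (Fin 2) K) * (X 0 * pderiv 0 P) +
    (σ : MvPolynomial (Fin 2) K) * (X 1 * pderiv 1 P)

lemma aux_coeff_int (z : ℤ) (P : MvPolynomial (Fin 2) K) (m : Fin 2 →₀ ℕ) :
    coeff m ((z : MvPolynomial (Fin 2) K) * P) = (z : K) * coeff m P := by
  have : (z : MvPolynomial (Fin 2) K) = C (z : K) := by simp
  rw [this, coeff_C_mul]

lemma aux_coeff_euler (ρ σ : ℤ) (P : MvPolynomial (Fin 2) K) (m : Fin 2 →₀ ℕ) :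
    coeff m (EulerOp ρ σ P) = ((ρ * (m 0 : ℤ) + σ * (m 1 : ℤ) : ℤ) : K) * coeff m P := by
  unfold EulerOp
  rw [coeff_add, aux_coeff_int, aux_coeff_int, aux_coeff_X_mul, aux_coeff_X_mul]
  push_cast
  ring

lemma aux_fin2 (m : Fin 2 →₀ ℕ) :
    Finsupp.single 0 (m 0) + Finsupp.single 1 (m 1) = m := by
  ext j
  fin_cases j <;> simp

lemma aux_homog_of_euler (ρ σ d : ℤ) (P : MvPolynomial (Fin 2) K)
    (h : EulerOp ρ σ P = (d : MvPolynomial (Fin 2) K) * P) :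
    ∀ p ∈ Supp P, ρ * (p.1 : ℤ) + σ * (p.2 : ℤ) = d := by
  intro p hp
  have h1 := congrArg (coeff (Finsupp.single 0 p.1 + Finsupp.single 1 p.2)) h
  rw [aux_coeff_euler, aux_coeff_int] at h1
  have h2 := mul_right_cancel₀ hp h1
  have h3 := Int.cast_injective h2
  simpa using h3

lemma aux_isHomog (ρ σ d : ℤ) (P : MvPolynomial (Fin 2) K)
    (h : EulerOp ρ σ P = (d : MvPolynomial (Fin 2) K) * P) : IsHomog ρ σ P := by
  intro p hp q hq
  rw [aux_homog_of_euler ρ σ d P h p hp, aux_homog_of_euler ρ σ d P h q hq]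

lemma aux_euler (ρ σ : ℤ) (P : MvPolynomial (Fin 2) K) (h : IsHomog ρ σ P) :
    ∃ d : ℤ, EulerOp ρ σ P = (d : MvPolynomial (Fin 2) K) * P := by
  by_cases hP : P = 0
  · exact ⟨0, by simp [hP, EulerOp]⟩
  obtain ⟨m₀, hm₀⟩ := MvPolynomial.ne_zero_iff.1 hP
  have hs : ∀ m : Fin 2 →₀ ℕ, coeff m P ≠ 0 → (m 0, m 1) ∈ Supp P := by
    intro m hm
    change coeff (Finsupp.single 0 (m 0) + Finsupp.single 1 (m 1)) P ≠ 0
    rwa [aux_fin2]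
  refine ⟨ρ * (m₀ 0 : ℤ) + σ * (m₀ 1 : ℤ), ?_⟩
  ext m
  rw [aux_coeff_euler, aux_coeff_int]
  by_cases hm : coeff m P = 0
  · simp [hm]
  · have := h _ (hs m hm) _ (hs m₀ hm₀)
    simp only at this
    rw [this]

lemma aux_wdeg (ρ σ d : ℤ) (P : MvPolynomial (Fin 2) K) (hP : P ≠ 0)
    (h : EulerOp ρ σ P = (d : MvPolynomial (Fin 2) K) * P) : wdeg ρ σ P = d := by
  obtain ⟨m, hm⟩ := MvPolynomial.ne_zero_iff.1 hP
  have hs : (m 0, m 1) ∈ Supp P := by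
    change coeff (Finsupp.single 0 (m 0) + Finsupp.single 1 (m 1)) P ≠ 0
    rwa [aux_fin2]
  have : {e : ℤ | ∃ p ∈ Supp P, e = ρ * (p.1 : ℤ) + σ * (p.2 : ℤ)} = {d} := by
    ext e
    constructor
    · rintro ⟨p, hp, rfl⟩
      exact aux_homog_of_euler ρ σ d P h p hp
    · rintro rfl
      exact ⟨_, hs, (aux_homog_of_euler ρ σ _ P h _ hs).symm⟩
  unfold wdeg
  rw [this, csSup_singleton]

lemma aux_dvd_pderiv (j : Fin 2) (p : MvPolynomial (Fin 2) K) (h : p ∣ pderiv j p) :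
    pderiv j p = 0 := by
  by_contra h0
  obtain ⟨q, hq⟩ := h
  have hp : p ≠ 0 := by rintro rfl; simp at h0
  have hq0 : q ≠ 0 := by rintro rfl; simp [hq] at h0
  have h1 : p.totalDegree ≤ (pderiv j p).totalDegree := by
    rw [hq, totalDegree_mul_of_isDomain hp hq0]; omega
  obtain ⟨m, hm, hmd⟩ : ∃ m ∈ (pderiv j p).support,
      (pderiv j p).totalDegree = m.sum fun _ e => e := by
    have := Finset.exists_mem_eq_sup (pderiv j p).support
      (MvPolynomial.support_nonempty.2 h0) (fun m => m.sum fun _ e => e)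
    exact this
  rw [mem_support_iff, coeff_pderiv] at hm
  have hm' : m + Finsupp.single j 1 ∈ p.support := by
    rw [mem_support_iff]; exact left_ne_zero_of_mul hm
  have h2 := le_totalDegree hm'
  rw [Finsupp.sum_add_index' (by simp) (by simp)] at h2
  simp at h2
  omega

lemma aux_prime (p : MvPolynomial (Fin 2) K) (hp : Prime p) (h0 : p ∣ pderiv 0 p)
    (h1 : p ∣ pderiv 1 p) : False := by
  have e : ∀ j : Fin 2, pderiv j p = 0 := by
    intro j
    apply aux_dvd_pderiv
    fin_cases j
    · exact h0
    · exact h1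
  have hC : p = C (coeff 0 p) := by
    ext m
    by_cases hm : m = 0
    · simp [hm]
    · rw [coeff_C, if_neg (Ne.symm hm)]
      obtain ⟨j, hj⟩ := Finsupp.ne_iff.1 hm
      have := congrArg (coeff (m - Finsupp.single j 1)) (e j)
      rw [coeff_pderiv, Finsupp.sub_add_single_one_cancel hj] at this
      simp only [coeff_zero, mul_eq_zero] at this
      rcases this with h | h
      · exact h
      · exact absurd h (Nat.cast_add_one_ne_zero _)
  apply hp.not_isUnit
  rw [hC]
  apply IsUnit.map
  rw [isUnit_iff_ne_zero]
  intro h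
  rw [h, C_0] at hC
  exact hp.ne_zero hC

/-- One coordinate of the key divisibility. -/
lemma aux_key (j : Fin 2) (p R' G' S : MvPolynomial (Fin 2) K) (hp : Prime p)
    (hR' : ¬ p ∣ R') (hG' : ¬ p ∣ G') (w g : ℤ) (a k i : ℕ) (hka : k < a) (hi : 2 ≤ i)
    (hw : 0 < w) (hg : w ≤ g)
    (h : (w : MvPolynomial (Fin 2) K) * (p ^ a * R') * pderiv j (p ^ k * G')
      - (g : MvPolynomial (Fin 2) K) * (p ^ k * G') * pderiv j (p ^ a * R')
      = S * (p ^ a * R') ^ i) : p ∣ pderiv j p := by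
  have hpow : ∀ n : ℕ, p * pderiv j (p ^ n) = (n : MvPolynomial (Fin 2) K) * p ^ n * pderiv j p := by
    intro n
    rw [pderiv_pow]
    cases n with
    | zero => simp
    | succ n => simp only [Nat.add_sub_cancel]; ring
  obtain ⟨c, hc⟩ : ∃ c, a * i = a + k + c := by
    apply Nat.exists_eq_add_of_le
    nlinarith
  have h1 : p ^ (a + k) * (((w * k - g * a : ℤ) : MvPolynomial (Fin 2) K) * (pderiv j p * (R' * G')))
      = p ^ (a + k) * (p * (S * p ^ c * R' ^ i
        - w * R' * pderiv j G' + g * G' * pderiv j R')) := by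
    rw [mul_pow, ← pow_mul, hc, pderiv_mul, pderiv_mul] at h
    push_cast
    have ha := hpow a
    have hk := hpow k
    simp only [pow_add] at h ⊢
    linear_combination p * h - (w * p ^ a * R' * G') * hk + (g * p ^ k * G' * R') * ha
  have h2 := mul_left_cancel₀ (pow_ne_zero _ hp.ne_zero) h1
  have hne : (w * k - g * a : ℤ) ≠ 0 := by
    have : (k : ℤ) < a := by exact_mod_cast hka
    have hk0 : (0 : ℤ) ≤ k := by positivity
    nlinarith
  have h3 : p ∣ ((w * k - g * a : ℤ) : MvPolynomial (Fin 2) K) * (pderiv j p * (R' * G')) :=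
    ⟨_, h2⟩
  rcases hp.dvd_or_dvd h3 with h4 | h4
  · exfalso
    apply hp.not_isUnit
    apply isUnit_of_dvd_unit h4
    have : ((w * k - g * a : ℤ) : MvPolynomial (Fin 2) K) = C ((w * k - g * a : ℤ) : K) := by simp
    rw [this]
    apply IsUnit.map
    rw [isUnit_iff_ne_zero]
    exact Int.cast_ne_zero.2 hne
  · rcases hp.dvd_or_dvd h4 with h5 | h5
    · exact h5
    · rcases hp.dvd_or_dvd h5 with h6 | h6
      · exact absurd h6 hR'
      · exact absurd h6 hG'

lemma aux_dvd (ρ σ w g : ℤ) (i : ℕ) (hi : 2 ≤ i) (R G : MvPolynomial (Fin 2) K)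
    (hR : R ≠ 0) (hw : 0 < w) (hg : w ≤ g)
    (hER : EulerOp ρ σ R = (w : MvPolynomial (Fin 2) K) * R)
    (hEG : EulerOp ρ σ G = (g : MvPolynomial (Fin 2) K) * G)
    (hbr : Jb R G = R ^ i) : R ∣ G := by
  have hG : G ≠ 0 := by
    rintro rfl
    simp [Jb] at hbr
    exact pow_ne_zero _ hR hbr.symm
  unfold EulerOp at hER hEG
  unfold Jb at hbr
  have hy : (w : MvPolynomial (Fin 2) K) * R * pderiv 1 G
      - (g : MvPolynomial (Fin 2) K) * G * pderiv 1 R = ((ρ : MvPolynomial (Fin 2) K) * X 0) * R ^ i := by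
    linear_combination (ρ * X 0) * hbr - pderiv 1 G * hER + pderiv 1 R * hEG
  have hx : (w : MvPolynomial (Fin 2) K) * R * pderiv 0 G
      - (g : MvPolynomial (Fin 2) K) * G * pderiv 0 R = (-(σ : MvPolynomial (Fin 2) K) * X 1) * R ^ i := by
    linear_combination (-σ * X 1) * hbr - pderiv 0 G * hER + pderiv 0 R * hEG
  have main : ∀ (p : MvPolynomial (Fin 2) K) (m : ℕ), Prime p → p ^ m ∣ R → p ^ m ∣ G := by
    intro p m hp hm
    obtain ⟨a, R', hR', eR⟩ : ∃ (a : ℕ) (Q : MvPolynomial (Fin 2) K),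
        ¬ p ∣ Q ∧ R = p ^ a * Q := by
      obtain ⟨c, h1, h2⟩ :=
        (FiniteMultiplicity.of_prime_left hp hR).exists_eq_pow_mul_and_not_dvd
      exact ⟨_, c, h2, h1⟩
    obtain ⟨k, G', hG', eG⟩ : ∃ (a : ℕ) (Q : MvPolynomial (Fin 2) K),
        ¬ p ∣ Q ∧ G = p ^ a * Q := by
      obtain ⟨c, h1, h2⟩ :=
        (FiniteMultiplicity.of_prime_left hp hG).exists_eq_pow_mul_and_not_dvd
      exact ⟨_, c, h2, h1⟩
    have hma : m ≤ a := by
      rw [eR] at hm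
      by_contra hlt
      push Not at hlt
      have : p ^ a * p ∣ p ^ a * R' := by
        rw [← pow_succ]; exact (pow_dvd_pow p hlt).trans hm
      exact hR' ((mul_dvd_mul_iff_left (pow_ne_zero _ hp.ne_zero)).1 this)
    have hak : a ≤ k := by
      by_contra hka
      push Not at hka
      rw [eR, eG] at hx hy
      exact aux_prime p hp (aux_key 0 p R' G' _ hp hR' hG' w g a k i hka hi hw hg hx)
        (aux_key 1 p R' G' _ hp hR' hG' w g a k i hka hi hw hg hy)
    rw [eG]
    exact (pow_dvd_pow p (hma.trans hak)).mul_right _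
  have all : ∀ d : MvPolynomial (Fin 2) K, d ∣ R → d ∣ G := by
    intro d
    refine UniqueFactorizationMonoid.induction_on_coprime (P := fun d => d ∣ R → d ∣ G) d ?_ ?_ ?_ ?_
    · intro h; exact absurd (zero_dvd_iff.1 h) hR
    · intro x hx _; exact hx.dvd
    · intro p m hp h; exact main p m hp h
    · intro x y hxy h1 h2 h
      exact hxy.mul_dvd (h1 ((dvd_mul_right x y).trans h)) (h2 ((dvd_mul_left y x).trans h))
  exact all R dvd_rfl

lemma aux_degree (ρ σ w g : ℤ) (i : ℕ) (R G : MvPolynomial (Fin 2) K)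
    (hR : R ≠ 0)
    (hER : EulerOp ρ σ R = (w : MvPolynomial (Fin 2) K) * R)
    (hEG : EulerOp ρ σ G = (g : MvPolynomial (Fin 2) K) * G)
    (hbr : Jb R G = R ^ (i + 1)) : g = i * w + ρ + σ := by
  have hcast : ∀ (j : Fin 2) (z : ℤ), pderiv j (z : MvPolynomial (Fin 2) K) = 0 := by
    intro j z
    simp
  unfold EulerOp at hER hEG
  unfold Jb at hbr
  have R0 := congrArg (pderiv 0) hER
  have R1 := congrArg (pderiv 1) hER
  have G0 := congrArg (pderiv 0) hEG
  have G1 := congrArg (pderiv 1) hEG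
  have B0 := congrArg (pderiv 0) hbr
  have B1 := congrArg (pderiv 1) hbr
  have c10 : pderiv 0 (X 1 : MvPolynomial (Fin 2) K) = 0 := pderiv_X_of_ne (by decide)
  have c01 : pderiv 1 (X 0 : MvPolynomial (Fin 2) K) = 0 := pderiv_X_of_ne (by decide)
  simp only [map_add, map_sub, pderiv_mul, hcast, pderiv_X_self, c10, c01, aux_comm, pderiv_pow,
    Nat.add_sub_cancel] at R0 R1 G0 G1 B0 B1
  have key : ((g : MvPolynomial (Fin 2) K) - (i * w + ρ + σ)) * R ^ (i + 1) = 0 := by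
    push_cast at B0 B1
    linear_combination (-(w + g - ρ - σ : MvPolynomial (Fin 2) K)) * hbr + ρ * X 0 * B0 + σ * X 1 * B1
      + (i + 1) * R ^ i * hER - pderiv 1 G * R0 - pderiv 0 R * G1 + pderiv 1 R * G0 + pderiv 0 G * R1
  have h2 := (mul_eq_zero.1 key).resolve_right (pow_ne_zero _ hR)
  have h3 : ((g - (i * w + ρ + σ) : ℤ) : MvPolynomial (Fin 2) K) = 0 := by
    push_cast; exact h2
  have := Int.cast_eq_zero.1 h3
  linarith

lemma aux_jb_mul (R G : MvPolynomial (Fin 2) K) : Jb R (R * G) = R * Jb R G := by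
  unfold Jb
  simp only [pderiv_mul]
  ring

lemma aux_euler_mul (ρ σ : ℤ) (P Q : MvPolynomial (Fin 2) K) :
    EulerOp ρ σ (P * Q) = EulerOp ρ σ P * Q + P * EulerOp ρ σ Q := by
  unfold EulerOp
  simp only [pderiv_mul]
  ring

lemma aux_up (ρ σ w g : ℤ) (R G : MvPolynomial (Fin 2) K) (i : ℕ)
    (hER : EulerOp ρ σ R = (w : MvPolynomial (Fin 2) K) * R)
    (hEG : EulerOp ρ σ G = (g : MvPolynomial (Fin 2) K) * G)
    (hbr : Jb R G = R ^ i) (k : ℕ) :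
    ∃ (g' : ℤ) (G' : MvPolynomial (Fin 2) K),
      EulerOp ρ σ G' = (g' : MvPolynomial (Fin 2) K) * G' ∧ Jb R G' = R ^ (i + k) := by
  induction k with
  | zero => exact ⟨g, G, hEG, hbr⟩
  | succ k ih =>
    obtain ⟨g', G', h1, h2⟩ := ih
    refine ⟨w + g', R * G', ?_, ?_⟩
    · rw [aux_euler_mul, hER, h1]; push_cast; ring
    · rw [aux_jb_mul, h2]; ring

lemma aux_down (ρ σ w : ℤ) (R : MvPolynomial (Fin 2) K) (n : ℕ) (hn : 2 ≤ n)
    (hR : R ≠ 0) (hw : 0 < w) (hineq : 0 ≤ ((n : ℤ) - 1) * w + ρ + σ)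
    (hER : EulerOp ρ σ R = (w : MvPolynomial (Fin 2) K) * R) (k : ℕ) :
    ∀ (g : ℤ) (G : MvPolynomial (Fin 2) K),
    EulerOp ρ σ G = (g : MvPolynomial (Fin 2) K) * G → Jb R G = R ^ (n + k) →
    ∃ (g' : ℤ) (G' : MvPolynomial (Fin 2) K),
      EulerOp ρ σ G' = (g' : MvPolynomial (Fin 2) K) * G' ∧ Jb R G' = R ^ n := by
  induction k with
  | zero => intro g G h1 h2; exact ⟨g, G, h1, h2⟩
  | succ k ih =>
    intro g G hEG hbr
    have hdeg := aux_degree ρ σ w g (n + k) R G hR hER hEG hbr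
    have hg : w ≤ g := by
      rw [hdeg]
      push_cast
      have : (0 : ℤ) ≤ k * w := by positivity
      nlinarith
    obtain ⟨G', rfl⟩ := aux_dvd ρ σ w g (n + (k + 1)) (by omega) R G hR hw hg hER hEG hbr
    refine ih (g - w) G' ?_ ?_
    · rw [aux_euler_mul, hER] at hEG
      apply mul_left_cancel₀ hR
      push_cast
      linear_combination hEG
    · rw [aux_jb_mul] at hbr
      apply mul_left_cancel₀ hR
      rw [hbr]; ring


/-- Theorem "reduccion de j": if `[R,G₁]=R^i` and `(n−1)·v_{ρ,σ}(R)+ρ+σ ≥ 0` with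
`n ≥ 2`, then there is a `(ρ,σ)`-homogeneous `G₂` with `[R,G₂]=R^n`. -/
theorem stmt8 (K : Type*) [Field K] [CharZero K]
    (ρ σ : ℤ) (hgcd : Int.gcd ρ σ = 1) (hρ : 0 < ρ) (hρσ : ρ + σ < 0)
    (i n : ℕ) (hn : 2 ≤ n)
    (R G₁ : MvPolynomial (Fin 2) K) (hR : R ≠ 0)
    (hhomR : IsHomog ρ σ R) (hhomG : IsHomog ρ σ G₁)
    (hbr : Jb R G₁ = R ^ i)
    (hineq : 0 ≤ ((n : ℤ) - 1) * wdeg ρ σ R + ρ + σ) :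
    ∃ G₂ : MvPolynomial (Fin 2) K, IsHomog ρ σ G₂ ∧ Jb R G₂ = R ^ n := by
  obtain ⟨w, hER⟩ := aux_euler ρ σ R hhomR
  obtain ⟨g, hEG⟩ := aux_euler ρ σ G₁ hhomG
  rw [aux_wdeg ρ σ w R hR hER] at hineq
  have hw : 0 < w := by
    have : (2 : ℤ) ≤ n := by exact_mod_cast hn
    by_contra h
    nlinarith
  rcases le_total i n with h | h
  · obtain ⟨k, rfl⟩ := Nat.exists_eq_add_of_le h
    obtain ⟨g', G', h1, h2⟩ := aux_up ρ σ w g R G₁ i hER hEG hbr k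
    exact ⟨G', aux_isHomog ρ σ g' G' h1, h2⟩
  · obtain ⟨k, rfl⟩ := Nat.exists_eq_add_of_le h
    obtain ⟨g', G', h1, h2⟩ := aux_down ρ σ w R n hn hR hw hineq hER k g G₁ hEG hbr
    exact ⟨G', aux_isHomog ρ σ g' G' h1, h2⟩

end
end

section
/- Set w := x^8 y^5, R := 9·x^{14} y^8·(1 + w) and G := −x^7 y^4·(1 + w)² in K[x,y]. Then R and G are (5,−8)-homogeneous, R is not a monomial, and [G,R] = R². -/
open MvPolynomial

noncomputable section

variable {K : Type*} [Field K] [CharZero K]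

theorem coeff_term (c : K) (a b i j : ℕ) :
    MvPolynomial.coeff (Finsupp.single 0 i + Finsupp.single 1 j)
      (C c * X 0 ^ a * X 1 ^ b : MvPolynomial (Fin 2) K) = if a = i ∧ b = j then c else 0 := by
  have h : (C c * X 0 ^ a * X 1 ^ b : MvPolynomial (Fin 2) K)
      = monomial (Finsupp.single 0 a + Finsupp.single 1 b) c := by
    rw [X_pow_eq_monomial, X_pow_eq_monomial, C_mul_monomial, monomial_mul]
    simp
  rw [h, coeff_monomial]
  congr 1
  apply propext
  constructor
  · intro h
    have h0 := DFunLike.congr_fun h 0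
    have h1 := DFunLike.congr_fun h 1
    simp at h0 h1
    exact ⟨h0, h1⟩
  · rintro ⟨rfl, rfl⟩
    rfl

/-- With `w = x⁸y⁵`, `R = 9x¹⁴y⁸(1+w)` and `G = −x⁷y⁴(1+w)²`, the polynomials
`R` and `G` are `(5,−8)`-homogeneous, `R` is not a monomial, and `[G,R]=R²`. -/
theorem stmt11 (K : Type*) [Field K] [CharZero K] :
    let w : MvPolynomial (Fin 2) K := MvPolynomial.X 0 ^ 8 * MvPolynomial.X 1 ^ 5
    let R : MvPolynomial (Fin 2) K :=
      (9 : MvPolynomial (Fin 2) K) * MvPolynomial.X 0 ^ 14 * MvPolynomial.X 1 ^ 8 * (1 + w)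
    let G : MvPolynomial (Fin 2) K :=
      - (MvPolynomial.X 0 ^ 7 * MvPolynomial.X 1 ^ 4 * (1 + w) ^ 2)
    IsHomog 5 (-8) R ∧ IsHomog 5 (-8) G ∧ ¬ IsMonomial R ∧ Jb G R = R ^ 2 := by
  intro w R G
  have hR : R = C 9 * X 0 ^ 14 * X 1 ^ 8 + C 9 * X 0 ^ 22 * X 1 ^ 13 := by
    have h9 : (C 9 : MvPolynomial (Fin 2) K) = 9 := map_ofNat C 9
    rw [h9]
    simp only [R, w]
    ring
  have hG : G = C (-1) * X 0 ^ 7 * X 1 ^ 4 + C (-2) * X 0 ^ 15 * X 1 ^ 9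
      + C (-1) * X 0 ^ 23 * X 1 ^ 14 := by
    have h2 : (C 2 : MvPolynomial (Fin 2) K) = 2 := map_ofNat C 2
    rw [C_neg, C_neg, h2, C_1]
    simp only [G, w]
    ring
  have sR : ∀ p ∈ Supp R, 5 * (p.1 : ℤ) + (-8) * (p.2 : ℤ) = 6 := by
    rintro ⟨i, j⟩ hp
    simp only [Supp, Set.mem_setOf_eq, hR, coeff_add, coeff_term] at hp
    by_contra hne
    apply hp
    rw [if_neg (by simp only at hne; omega), if_neg (by simp only at hne; omega)]
    simp
  have sG : ∀ p ∈ Supp G, 5 * (p.1 : ℤ) + (-8) * (p.2 : ℤ) = 3 := by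
    rintro ⟨i, j⟩ hp
    simp only [Supp, Set.mem_setOf_eq, hG, coeff_add, coeff_term] at hp
    by_contra hne
    apply hp
    rw [if_neg (by simp only at hne; omega), if_neg (by simp only at hne; omega),
      if_neg (by simp only at hne; omega)]
    simp
  refine ⟨fun p hp q hq => (sR p hp).trans (sR q hq).symm,
    fun p hp q hq => (sG p hp).trans (sG q hq).symm, ?_, ?_⟩
  · intro h
    have h1 : ((14, 8) : ℕ × ℕ) ∈ Supp R := by
      simp only [Supp, Set.mem_setOf_eq, hR, coeff_add, coeff_term]
      norm_num
    have h2 : ((22, 13) : ℕ × ℕ) ∈ Supp R := by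
      simp only [Supp, Set.mem_setOf_eq, hR, coeff_add, coeff_term]
      norm_num
    have := h h1 h2
    simp at this
  · have h9 : (C 9 : MvPolynomial (Fin 2) K) = 9 := map_ofNat C 9
    have h2 : (C 2 : MvPolynomial (Fin 2) K) = 2 := map_ofNat C 2
    rw [hR, hG]
    simp only [Jb, map_add, Derivation.leibniz, Derivation.leibniz_pow, pderiv_C, pderiv_X_self,
      pderiv_X_of_ne (show (0 : Fin 2) ≠ 1 by decide),
      pderiv_X_of_ne (show (1 : Fin 2) ≠ 0 by decide), smul_eq_mul, nsmul_eq_mul]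
    rw [C_neg, C_neg, h2, h9, C_1]
    push_cast
    ring

end
end
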